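/- Let (R, m) be a regular local ring of dimension n containing a field, and let I be a proper ideal of R with ht_R(I) = d. Then H_m^{n−d}(H_I^d(R)) ≠ 0. -/

import Mathlib

open CategoryTheory Opposite

noncomputable section

/-- Krull dimension of the support of a module. -/
def moduleSuppDim (R : Type) [CommRing R] (M : Type) [AddCommGroup M] [Module R M] :
    WithBot ℕ∞ :=
  Order.krullDim (Module.support R M)

/-- `M` has injective dimension at most `n` (as `R`-module), characterized by
vanishing of `Ext^i(N, M)` for all `i > n`. -/
def injDimLE (R : Type) [CommRing R] (M : Type) [AddCommGroup M] [Module R M] (n : ℕ) : Prop :=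
  ∀ (N : ModuleCat R) (i : ℕ), n < i →
    Subsingleton (((Ext R (ModuleCat R) i).obj (op N)).obj (ModuleCat.of R M))

/-- The injective dimension of `M` as an `R`-module, valued in `ℕ∞`. -/
def injDim (R : Type) [CommRing R] (M : Type) [AddCommGroup M] [Module R M] : ℕ∞ :=
  sInf {n : ℕ∞ | ∃ m : ℕ, (m : ℕ∞) = n ∧ injDimLE R M m}

/-- The height of an ideal: the infimum of the heights of primes containing it. -/
def idealHeight (R : Type) [CommRing R] (I : Ideal R) : ℕ∞ :=
  sInf {h : ℕ∞ | ∃ p : PrimeSpectrum R, I ≤ p.asIdeal ∧ Order.height p = h}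

/-- A regular local ring: a Noetherian local ring whose maximal ideal can be generated
by `dim R` elements. -/
def IsRegularLocal (R : Type) [CommRing R] [IsLocalRing R] : Prop :=
  IsNoetherianRing R ∧
    ∃ s : Finset R, Ideal.span (s : Set R) = IsLocalRing.maximalIdeal R ∧
      (s.card : WithBot ℕ∞) = ringKrullDim R

/-- A ring contains a field if some subring of it is a field. -/
def ContainsField (R : Type) [CommRing R] : Prop :=
  ∃ k : Subring R, IsField k

/-- The underlying module of the `i`-th local cohomology of `R` with support in `I`. -/
abbrev LocalCohomologyMod (R : Type) [CommRing R] (I : Ideal R) (i : ℕ) : Type :=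
  (localCohomology I i).obj (ModuleCat.of R R)

end

/-!
A regular local ring is Cohen–Macaulay, so `I` contains a regular sequence `xs` of length
`d = ht I`, and `xs` extends to a regular sequence `xs ++ ys` of length `n`. Write `R_xs` for the
direct limit of the quotients `R ⧸ (x₁ᵗ, …, x_dᵗ)`, that is, for `H_(xs)^d(R)`. Multiplication by
the `x_i` is locally nilpotent on `R ⧸ Iᵗ`, so iterating the long exact sequence of
`0 ⟶ P ⟶ P_x ⟶ P_x ⧸ P ⟶ 0` gives `Ext^d(R ⧸ Iᵗ, R) ≅ Hom(R ⧸ Iᵗ, R_xs)`. Hence there is a map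
`H_I^d(R) ⟶ R_xs` whose image contains every class of `R_xs` killed by `I`, in particular that of
an `a ∉ (xs, ys)` with `I a ⊆ (xs)`; a preimage `c` killed by `I` defines `R ⧸ (xs) ⟶ H_I^d(R)`.
The composite `R ⧸ (xs) ⟶ H_I^d(R) ⟶ R_xs` sends the class of `1` in the top local cohomology
`(R ⧸ (xs))_ys` to the class of `a` in `R_{xs ++ ys}`, which is nonzero. By naturality of the
`Ext`-classes of the sequence `ys`, the image of the former in `H_m^{n-d}(H_I^d(R))` is nonzero too.
-/

open IsLocalRing RingTheory.Sequence
open scoped Pointwise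

universe u

section RegularLocalRing

variable {R : Type u} [CommRing R]

lemma span_singleton_eq_smul_top (z : R) : Ideal.span {z} = z • (⊤ : Ideal R) := by
  rw [← Submodule.ideal_span_singleton_smul, smul_eq_mul, Ideal.mul_top]

lemma exists_mem_maximalIdeal_notMem_sq_notMem_minimalPrimes [IsLocalRing R] [IsNoetherianRing R]
    (h : maximalIdeal R ∉ minimalPrimes R) :
    ∃ z ∈ maximalIdeal R, z ∉ maximalIdeal R ^ 2 ∧ ∀ p ∈ minimalPrimes R, z ∉ p := by
  by_contra! hcover
  have hfin := minimalPrimes.finite_of_isNoetherianRing R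
  have hsub : (maximalIdeal R : Set R) ⊆
      ⋃ p ∈ (insert (maximalIdeal R ^ 2) hfin.toFinset : Finset (Ideal R)), (p : Set R) := by
    intro z hz
    by_cases hz2 : z ∈ maximalIdeal R ^ 2
    · exact Set.mem_biUnion (by simp) hz2
    · obtain ⟨p, hp, hzp⟩ := hcover z hz hz2
      exact Set.mem_biUnion (by simp [hp]) hzp
  obtain ⟨p, hp, hle⟩ := (Ideal.subset_union_prime (maximalIdeal R ^ 2) (maximalIdeal R ^ 2)
    fun p hp hne _ ↦ ((hfin.mem_toFinset.1 (Finset.mem_of_mem_insert_of_ne hp hne)).1.1)).1 hsub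
  rcases Finset.mem_insert.1 hp with rfl | hp
  · have hbot : maximalIdeal R = ⊥ :=
      Submodule.eq_bot_of_le_smul_of_le_jacobson_bot _ _ (IsNoetherian.noetherian _)
        (by simpa [pow_two] using hle) (maximalIdeal_le_jacobson _)
    exact h ⟨⟨inferInstance, bot_le⟩, fun q _ _ ↦ hbot ▸ bot_le⟩
  · have hp := hfin.mem_toFinset.1 hp
    exact h ((le_maximalIdeal hp.1.1.ne_top).antisymm hle ▸ hp)

lemma isLocalRing_quotient_span_singleton [IsLocalRing R] {z : R} (hz : z ∈ maximalIdeal R) :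
    IsLocalRing (R ⧸ Ideal.span {z}) := by
  have : Nontrivial (R ⧸ Ideal.span {z}) :=
    Ideal.Quotient.nontrivial_iff.2 fun h ↦ hz (Ideal.span_singleton_eq_top.1 h)
  exact IsLocalRing.of_surjective' _ Ideal.Quotient.mk_surjective

lemma spanFinrank_map_quotient_add_one_le [IsLocalRing R] [IsNoetherianRing R] {z : R}
    (hz : z ∈ maximalIdeal R) (hz2 : z ∉ maximalIdeal R ^ 2) :
    ((maximalIdeal R).map (Ideal.Quotient.mk (Ideal.span {z}))).spanFinrank + 1 ≤
      (maximalIdeal R).spanFinrank := by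
  classical
  obtain ⟨S, hcard, hS⟩ := Submodule.FG.exists_span_finset_card_eq_spanFinrank
    (IsNoetherian.noetherian (maximalIdeal R))
  obtain ⟨c, -, hc⟩ := Submodule.mem_span_finset.1 (hS ▸ hz)
  obtain ⟨s, hs, hunit⟩ : ∃ s ∈ S, IsUnit (c s) := by
    by_contra! hcon
    refine hz2 (hc ▸ pow_two (maximalIdeal R) ▸ Ideal.sum_mem _ fun s hs ↦ ?_)
    exact Ideal.mul_mem_mul ((mem_maximalIdeal _).2 (hcon s hs)) (hS ▸ Submodule.subset_span hs)
  let π := Ideal.Quotient.mk (Ideal.span {z})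
  have hπs : π s ∈ Ideal.span (π '' (S.erase s)) := by
    rw [← Ideal.unit_mul_mem_iff_mem _ (hunit.map π), ← map_mul]
    have hsum : c s * s = z - ∑ t ∈ S.erase s, c t * t := by
      rw [← hc, eq_sub_iff_add_eq]
      exact Finset.add_sum_erase S (fun t ↦ c t * t) hs
    have hπz : π z = 0 := Ideal.Quotient.eq_zero_iff_mem.2 (Ideal.mem_span_singleton_self z)
    rw [hsum, map_sub, hπz, zero_sub, map_sum]
    refine neg_mem (Ideal.sum_mem _ fun t ht ↦ ?_)
    exact map_mul π _ _ ▸ Ideal.mul_mem_left _ _ (Ideal.subset_span ⟨t, ht, rfl⟩)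
  have hspan : (maximalIdeal R).map π = Ideal.span (π '' (S.erase s)) := by
    rw [← hS, ← Ideal.span, Ideal.map_span]
    conv_lhs => rw [← Finset.insert_erase hs]
    rw [Finset.coe_insert, Set.image_insert_eq]
    exact Submodule.span_insert_eq_span hπs
  have hle : ((maximalIdeal R).map π).spanFinrank ≤ (S.erase s).card := by
    rw [hspan, ← Finset.coe_image]
    refine (Submodule.spanFinrank_span_le_ncard_of_finite (Finset.finite_toSet _)).trans ?_
    exact (Set.ncard_coe_finset _).trans_le Finset.card_image_le
  rw [← hcard, ← Finset.card_erase_add_one hs]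
  lia

lemma isRegularLocalRing_quotient_span_singleton [IsRegularLocalRing R] {z : R}
    (hz : z ∈ maximalIdeal R) (hz2 : z ∉ maximalIdeal R ^ 2) :
    IsRegularLocalRing (R ⧸ Ideal.span {z}) ∧
      ringKrullDim R = ringKrullDim (R ⧸ Ideal.span {z}) + 1 := by
  have := isLocalRing_quotient_span_singleton hz
  have hmap : (maximalIdeal R).map (Ideal.Quotient.mk (Ideal.span {z})) = maximalIdeal _ :=
    map_maximalIdeal_of_surjective _ Ideal.Quotient.mk_surjective
  have hle := spanFinrank_map_quotient_add_one_le hz hz2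
  rw [hmap] at hle
  have hle' : ((maximalIdeal (R ⧸ Ideal.span {z})).spanFinrank : WithBot ℕ∞) + 1 ≤
      ringKrullDim R := by
    rw [← IsRegularLocalRing.spanFinrank_maximalIdeal]
    exact_mod_cast hle
  have hdim : ringKrullDim R ≤ ringKrullDim (R ⧸ Ideal.span {z}) + 1 := by
    have := ringKrullDim_le_ringKrullDim_quotient_add_card {z}
      (by simpa [ringJacobson_eq_maximalIdeal] using hz)
    rwa [Finset.coe_singleton, Finset.card_singleton, Nat.cast_one] at this
  have hreg : IsRegularLocalRing (R ⧸ Ideal.span {z}) :=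
    .of_spanFinrank_maximalIdeal_le _
      (ENat.WithBot.add_le_add_one_right_iff.1 (hle'.trans hdim))
  exact ⟨hreg, hdim.antisymm (hreg.spanFinrank_maximalIdeal ▸ hle')⟩

lemma isDomain_of_isPrime_span_singleton [IsLocalRing R] [IsNoetherianRing R] {z : R}
    (hz : z ∈ maximalIdeal R) (hprime : (Ideal.span {z}).IsPrime)
    (hmin : ∀ p ∈ minimalPrimes R, z ∉ p) : IsDomain R := by
  obtain ⟨p, hp, hple⟩ := Ideal.exists_minimalPrimes_le (I := ⊥) (J := Ideal.span {z}) bot_le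
  have hpp : p.IsPrime := hp.1.1
  have hsmul : p ≤ maximalIdeal R • p := by
    intro q hq
    obtain ⟨r, rfl⟩ := Ideal.mem_span_singleton'.1 (hple hq)
    exact mul_comm z r ▸ Ideal.mul_mem_mul hz ((hpp.mem_or_mem hq).resolve_right (hmin p hp))
  have hbot : p = ⊥ := Submodule.eq_bot_of_le_smul_of_le_jacobson_bot _ _
    (IsNoetherian.noetherian _) hsmul (maximalIdeal_le_jacobson _)
  rw [hbot] at hpp
  exact IsDomain.of_bot_isPrime R

lemma isWeaklyRegular_cons_of_map_quotient {z : R} {rs : List R} (hz : IsSMulRegular R z)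
    (h : IsWeaklyRegular (R ⧸ Ideal.span {z}) (rs.map (Ideal.Quotient.mk (Ideal.span {z})))) :
    IsWeaklyRegular R (z :: rs) := by
  refine (isWeaklyRegular_cons_iff _ _ _).2 ⟨hz, ?_⟩
  exact ((Submodule.quotEquivOfEq _ _ (span_singleton_eq_smul_top z)).isWeaklyRegular_congr rs).1
    ((isWeaklyRegular_map_algebraMap_iff (R ⧸ Ideal.span {z}) (R ⧸ Ideal.span {z}) rs).1 h)

/-- A Noetherian local ring is Cohen-Macaulay if its depth is its dimension; the depth is
encoded as the length of some regular sequence in the maximal ideal. -/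
def IsCohenMacaulayLocalRing (R : Type u) [CommRing R] [IsLocalRing R] : Prop :=
  ∃ rs : List R, (∀ r ∈ rs, r ∈ maximalIdeal R) ∧ IsWeaklyRegular R rs ∧
    (rs.length : WithBot ℕ∞) = ringKrullDim R

lemma maximalIdeal_notMem_minimalPrimes [IsLocalRing R]
    (h : 0 < ringKrullDim R) : maximalIdeal R ∉ minimalPrimes R := by
  intro hmin
  rw [← maximalIdeal_height_eq_ringKrullDim, Ideal.height_eq_zero_iff.2 hmin] at h
  exact h.ne' rfl

theorem isDomain_and_isCohenMacaulayLocalRing_of_isRegularLocalRing (n : ℕ) :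
    ∀ (R : Type u) [CommRing R] [IsRegularLocalRing R], ringKrullDim R = n →
      IsDomain R ∧ IsCohenMacaulayLocalRing R := by
  induction n with
  | zero =>
    intro R _ _ hn
    have hrank : (maximalIdeal R).spanFinrank = 0 := by
      exact_mod_cast IsRegularLocalRing.spanFinrank_maximalIdeal.trans hn
    have hbot : maximalIdeal R = ⊥ :=
      (Submodule.spanFinrank_eq_zero_iff_eq_bot (IsNoetherian.noetherian _)).1 hrank
    exact ⟨(isField_iff_maximalIdeal_eq.2 hbot).isDomain, [], by simp, .nil R R, by simp [hn]⟩
  | succ n ih =>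
    intro R _ _ hn
    obtain ⟨z, hz, hz2, hmin⟩ := exists_mem_maximalIdeal_notMem_sq_notMem_minimalPrimes
      (maximalIdeal_notMem_minimalPrimes (R := R) (by rw [hn]; exact_mod_cast n.succ_pos))
    obtain ⟨hreg, hdim⟩ := isRegularLocalRing_quotient_span_singleton hz hz2
    have hn' : ringKrullDim (R ⧸ Ideal.span {z}) = n := by
      rw [hn, Nat.cast_succ] at hdim
      exact (ENat.WithBot.add_one_cancel.1 hdim).symm
    obtain ⟨hdom, rs, hmem, hrs, hlen⟩ := ih _ hn'
    have : IsDomain R := isDomain_of_isPrime_span_singleton hz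
      ((Ideal.Quotient.isDomain_iff_prime _).1 hdom) hmin
    have hz0 : z ≠ 0 := by
      rintro rfl
      exact hz2 (zero_mem _)
    obtain ⟨rs, rfl⟩ := List.map_surjective_iff.2
      (Ideal.Quotient.mk_surjective (I := Ideal.span {z})) rs
    refine ⟨this, z :: rs, List.forall_mem_cons.2 ⟨hz, fun r hr ↦ ?_⟩,
      isWeaklyRegular_cons_of_map_quotient (.of_ne_zero hz0) hrs, ?_⟩
    · exact fun hunit ↦ hmem _ (List.mem_map_of_mem hr) (hunit.map _)
    · rw [hdim, ← hlen, List.length_map, List.length_cons, Nat.cast_succ]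

end RegularLocalRing

section Depth

variable (R : Type u) [CommRing R] [IsLocalRing R]

/-- `DepthGE R M k` says that the depth of the finitely generated module `M` is at least `k`. It is
encoded as the vanishing of `Ext i (residue field) M` for `i < k`, which Rees' theorem identifies
with the existence of an `M`-regular sequence of length `k` in the maximal ideal. -/
def DepthGE (M : Type u) [AddCommGroup M] [Module R M] (k : ℕ) : Prop :=
  ∀ i < k, Subsingleton
    (Abelian.Ext (ModuleCat.of R (R ⧸ maximalIdeal R)) (ModuleCat.of R M) i)

variable {R} {M : Type u} [AddCommGroup M] [Module R M] {k : ℕ}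

lemma DepthGE.mono {l : ℕ} (h : DepthGE R M l) (hkl : k ≤ l) : DepthGE R M k :=
  fun i hi ↦ h i (hi.trans_le hkl)

lemma DepthGE.of_linearEquiv {N : Type u} [AddCommGroup N] [Module R N] (h : DepthGE R M k)
    (e : M ≃ₗ[R] N) : DepthGE R N k := fun i hi ↦
  have : Subsingleton ((Abelian.extFunctorObj (ModuleCat.of R (R ⧸ maximalIdeal R)) i).obj
    (ModuleCat.of R M)) := h i hi
  ((Abelian.extFunctorObj (ModuleCat.of R (R ⧸ maximalIdeal R)) i).mapIso
    e.toModuleIso).addCommGroupIsoToAddEquiv.symm.toEquiv.subsingleton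

lemma DepthGE.quotSMulTop (h : DepthGE R M (k + 1)) {x : R} (hx : IsSMulRegular M x) :
    DepthGE R (QuotSMulTop x M) k := fun i hi ↦ by
  have hzero := AddCommGrpCat.isZero_of_iff_subsingleton.2 (h i (by lia))
  have hzero' := AddCommGrpCat.isZero_of_iff_subsingleton.2 (h (i + 1) (by lia))
  have hx' : IsSMulRegular (ModuleCat.of R M) x := hx
  exact AddCommGrpCat.subsingleton_of_isZero <| ShortComplex.Exact.isZero_of_both_zeros
    (Abelian.Ext.covariant_sequence_exact₃' _ hx'.smulShortComplex_shortExact i (i + 1) rfl)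
    (hzero.eq_zero_of_src _) (hzero'.eq_zero_of_tgt _)

lemma support_quotient_maximalIdeal_eq_zeroLocus_pow {s : ℕ} (hs : s ≠ 0) :
    Module.support R (R ⧸ maximalIdeal R) =
      PrimeSpectrum.zeroLocus ((maximalIdeal R ^ s : Ideal R) : Set R) := by
  rw [Module.support_eq_zeroLocus, Ideal.annihilator_quotient, PrimeSpectrum.zeroLocus_pow _ hs]

lemma maximalIdeal_pow_smul_top_lt_top [Module.Finite R M] [Nontrivial M] {s : ℕ} (hs : s ≠ 0) :
    maximalIdeal R ^ s • (⊤ : Submodule R M) < ⊤ :=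
  (Submodule.top_ne_ideal_smul_of_le_jacobson_annihilator
    ((Ideal.pow_le_self hs).trans (maximalIdeal_le_jacobson _))).symm.lt_top

variable [IsNoetherianRing R] [Module.Finite R M]

lemma DepthGE.exists_isRegular [Nontrivial M] (h : DepthGE R M k) {s : ℕ} (hs : s ≠ 0) :
    ∃ rs : List R, rs.length = k ∧ (∀ r ∈ rs, r ∈ maximalIdeal R ^ s) ∧ IsRegular M rs :=
  ModuleCat.exists_isRegular_of_exists_subsingleton_ext (maximalIdeal R ^ s) k (ModuleCat.of R M)
    (maximalIdeal_pow_smul_top_lt_top hs) (ModuleCat.of R (R ⧸ maximalIdeal R))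
    (support_quotient_maximalIdeal_eq_zeroLocus_pow hs) h

lemma depthGE_length_of_isRegular [Nontrivial M] {rs : List R}
    (hmem : ∀ r ∈ rs, r ∈ maximalIdeal R) (h : IsRegular M rs) : DepthGE R M rs.length :=
  ModuleCat.subsingleton_ext_of_exists_isRegular (maximalIdeal R)
    (ModuleCat.of R (R ⧸ maximalIdeal R))
    (by simpa using (support_quotient_maximalIdeal_eq_zeroLocus_pow (R := R) one_ne_zero).le)
    (ModuleCat.of R M)
    (by simpa using maximalIdeal_pow_smul_top_lt_top (R := R) (M := M) one_ne_zero) rs hmem h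

lemma DepthGE.exists_isSMulRegular (h : DepthGE R M (k + 1)) :
    ∃ x ∈ maximalIdeal R, IsSMulRegular M x := by
  have := h 0 k.succ_pos
  have : Subsingleton (ModuleCat.of R (R ⧸ maximalIdeal R) ⟶ ModuleCat.of R M) :=
    Abelian.Ext.addEquiv₀.subsingleton_congr.1 this
  have : Subsingleton ((R ⧸ maximalIdeal R) →ₗ[R] M) :=
    (ModuleCat.homAddEquiv (M := ModuleCat.of R (R ⧸ maximalIdeal R))
      (N := ModuleCat.of R M)).symm.subsingleton
  simpa only [Ideal.annihilator_quotient] using IsSMulRegular.subsingleton_linearMap_iff.1 this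

/- Some `v` killed by `P` lies outside `zM`, since otherwise Nakayama's lemma would kill the
`P`-torsion of `M`; then `P + (z)` annihilates the class of `v` in `M/zM`. -/
lemma exists_associatedPrimes_quotSMulTop_gt {z : R} (hz : z ∈ maximalIdeal R)
    (hreg : IsSMulRegular M z) {P : Ideal R} (hP : P ∈ associatedPrimes R M) :
    ∃ Q ∈ associatedPrimes R (QuotSMulTop z M), P < Q := by
  obtain ⟨hprime, x, hx⟩ := isAssociatedPrime_iff.1 hP
  have hx0 : x ≠ 0 := by
    rintro rfl
    exact hprime.ne_top (by rw [hx]; simp)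
  have hann : ∀ p ∈ P, p • x = 0 := fun p hp ↦ by
    simpa [Submodule.mem_colon_singleton] using hx.le hp
  have hzP : z ∉ P := fun h ↦ hx0 (hreg (by simpa using hann z h))
  obtain ⟨v, hv, hvz⟩ : ∃ v ∈ Submodule.torsionBySet R M P, v ∉ z • (⊤ : Submodule R M) := by
    by_contra! hcon
    have hle : Submodule.torsionBySet R M P ≤ maximalIdeal R • Submodule.torsionBySet R M P := by
      intro v hv
      obtain ⟨w, -, rfl⟩ := (Submodule.mem_smul_pointwise_iff_exists _ _ _).1 (hcon v hv)
      refine Submodule.smul_mem_smul hz ((Submodule.mem_torsionBySet_iff _ _).2 fun p ↦ hreg ?_)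
      simpa only [smul_zero, smul_comm z] using (Submodule.mem_torsionBySet_iff _ _).1 hv p
    have hbot := Submodule.eq_bot_of_le_smul_of_le_jacobson_bot _ _ (IsNoetherian.noetherian _) hle
      (maximalIdeal_le_jacobson _)
    have hxmem : x ∈ Submodule.torsionBySet R M P :=
      (Submodule.mem_torsionBySet_iff _ _).2 fun p ↦ hann p p.2
    exact hx0 (by simpa [hbot] using hxmem)
  let v' : QuotSMulTop z M := Submodule.Quotient.mk v
  have hann' : ∀ r ∈ P ⊔ Ideal.span {z}, r • v' = 0 := by
    have hle : P ⊔ Ideal.span {z} ≤ LinearMap.ker (LinearMap.toSpanSingleton R _ v') := by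
      refine sup_le (fun p hp ↦ ?_) ((Ideal.span_singleton_le_iff_mem _).2 ?_)
      · exact congrArg Submodule.Quotient.mk ((Submodule.mem_torsionBySet_iff _ _).1 hv ⟨p, hp⟩)
      · exact (Submodule.Quotient.mk_eq_zero _).2 (Submodule.smul_mem_pointwise_smul _ _ _ trivial)
    exact fun r hr ↦ hle hr
  obtain ⟨Q, hQ, hle⟩ := exists_le_isAssociatedPrime_of_isNoetherianRing R v'
    (fun h ↦ hvz ((Submodule.Quotient.mk_eq_zero _).1 h))
  have hsup : P ⊔ Ideal.span {z} ≤ Q := fun r hr ↦ hle (by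
    simpa [Submodule.mem_colon_singleton] using hann' r hr)
  refine ⟨Q, hQ, (le_sup_left.trans hsup).lt_of_not_ge fun h ↦ hzP (h (hsup ?_))⟩
  exact Ideal.mem_sup_right (Ideal.mem_span_singleton_self z)

lemma DepthGE.le_coheight (h : DepthGE R M k) {P : PrimeSpectrum R}
    (hP : P.asIdeal ∈ associatedPrimes R M) : (k : ℕ∞) ≤ Order.coheight P := by
  induction k generalizing M P with
  | zero => simp
  | succ k ih =>
    obtain ⟨z, hz, hreg⟩ := h.exists_isSMulRegular
    obtain ⟨Q, hQ, hlt⟩ := exists_associatedPrimes_quotSMulTop_gt hz hreg hP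
    have hlt : P < ⟨Q, hQ.isPrime⟩ := hlt
    calc ((k + 1 : ℕ) : ℕ∞) = k + 1 := by push_cast; rfl
      _ ≤ Order.coheight (⟨Q, hQ.isPrime⟩ : PrimeSpectrum R) + 1 := by
        gcongr
        exact ih (h.quotSMulTop hreg) hQ
      _ ≤ Order.coheight P := Order.coheight_add_one_le hlt

lemma DepthGE.exists_mem_isSMulRegular [Nontrivial M] (h : DepthGE R M k) {I : Ideal R}
    (hI : ∀ P : PrimeSpectrum R, I ≤ P.asIdeal → Order.coheight P < k) :
    ∃ x ∈ I, IsSMulRegular M x := by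
  by_contra! hcon
  obtain ⟨P₀, -⟩ := associatedPrimes.nonempty R M
  obtain ⟨P, hP, hle⟩ : ∃ P ∈ associatedPrimes R M, I ≤ P := by
    refine (Ideal.subset_union_prime_finite (associatedPrimes.finite R M) P₀ P₀
      fun P hP _ _ ↦ hP.isPrime).1 ?_
    rw [biUnion_associatedPrimes_eq_compl_regular R M]
    exact hcon
  exact (hI ⟨P, hP.isPrime⟩ hle).not_ge (h.le_coheight hP)

lemma DepthGE.exists_isWeaklyRegular [Nontrivial M] {I : Ideal R} (hI : I ≤ maximalIdeal R)
    {e : ℕ} (he : ∀ P : PrimeSpectrum R, I ≤ P.asIdeal → Order.coheight P ≤ e) {d : ℕ}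
    (h : DepthGE R M (d + e)) :
    ∃ xs : List R, xs.length = d ∧ (∀ r ∈ xs, r ∈ I) ∧ IsWeaklyRegular M xs ∧
      DepthGE R (M ⧸ (Ideal.ofList xs • ⊤ : Submodule R M)) e := by
  induction d generalizing M with
  | zero =>
    refine ⟨[], rfl, by simp, .nil R M, (h.mono (by lia)).of_linearEquiv ?_⟩
    exact (Submodule.quotEquivOfEqBot _ (by rw [Ideal.ofList_nil, Submodule.bot_smul])).symm
  | succ d ih =>
    have hlt : ∀ P : PrimeSpectrum R, I ≤ P.asIdeal → Order.coheight P < (d + 1 + e : ℕ) :=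
      fun P hP ↦ (he P hP).trans_lt (by exact_mod_cast (by lia : e < d + 1 + e))
    obtain ⟨x, hxI, hx⟩ := h.exists_mem_isSMulRegular hlt
    have := nontrivial_quotSMulTop_of_mem_maximalIdeal M (hI hxI)
    have hquot : DepthGE R (QuotSMulTop x M) (d + e) :=
      (h.mono (by lia : d + e + 1 ≤ d + 1 + e)).quotSMulTop hx
    obtain ⟨xs, hlen, hmem, hxs, hdepth⟩ := ih hquot
    exact ⟨x :: xs, by simp [hlen], List.forall_mem_cons.2 ⟨hxI, hmem⟩, .cons hx hxs,
      hdepth.of_linearEquiv (Submodule.quotOfListConsSMulTopEquivQuotSMulTopInner M x xs).symm⟩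

end Depth

section Selection

variable {R : Type u} [CommRing R]

lemma coheight_le_of_ringKrullDim_eq_add {P : PrimeSpectrum R} {d e : ℕ}
    (hdim : ringKrullDim R = (d + e : ℕ)) (hd : d ≤ Order.height P) : Order.coheight P ≤ e := by
  have : Nonempty (PrimeSpectrum R) := ⟨P⟩
  have hsum : Order.height P + Order.coheight P ≤ (d + e : ℕ) := by
    have hsup := Order.krullDim_eq_iSup_height_add_coheight_of_nonempty (α := PrimeSpectrum R)
    rw [← ringKrullDim, hdim] at hsup
    have hsup : ((d + e : ℕ) : ℕ∞) = ⨆ Q : PrimeSpectrum R, Order.height Q + Order.coheight Q := by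
      exact_mod_cast hsup
    exact hsup ▸ le_iSup (fun Q : PrimeSpectrum R ↦ Order.height Q + Order.coheight Q) P
  have hle : (d : ℕ∞) + Order.coheight P ≤ d + e :=
    (add_le_add_left hd _).trans (by simpa using hsum)
  exact (ENat.add_le_add_iff_left (ENat.natCast_ne_top d)).1 hle

lemma ofList_smul_top (rs : List R) : (Ideal.ofList rs • ⊤ : Submodule R R) = Ideal.ofList rs := by
  rw [smul_eq_mul, Ideal.mul_top]

lemma mul_mem_of_linearMap_quotient {I J : Ideal R} (f : (R ⧸ I) →ₗ[R] R ⧸ J) {a r : R}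
    (ha : Submodule.Quotient.mk a = f (Submodule.Quotient.mk 1)) (hr : r ∈ I) : r * a ∈ J := by
  have hr0 : r • (Submodule.Quotient.mk 1 : R ⧸ I) = 0 := by
    rw [← Submodule.Quotient.mk_smul]
    exact (Submodule.Quotient.mk_eq_zero _).2 (by simpa using hr)
  rw [← smul_eq_mul, ← Submodule.Quotient.mk_eq_zero, Submodule.Quotient.mk_smul, ha, ← map_smul,
    hr0, map_zero]

variable [IsNoetherianRing R]

lemma length_le_height_of_isWeaklyRegular {rs : List R} (h : IsWeaklyRegular R rs) {I : Ideal R}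
    (hmem : ∀ r ∈ rs, r ∈ I) : rs.length ≤ I.height := by
  rw [Ideal.height_eq_inf_minimalPrimes]
  refine le_iInf₂ fun P hP ↦ ?_
  have hprime : P.IsPrime := hP.1.1
  have hreg := h.isRegular_of_isLocalization_of_mem (Localization.AtPrime P) P
    fun r hr ↦ hP.1.2 (hmem r hr)
  have hdim := ringKrullDim_add_length_eq_ringKrullDim_of_isRegular _ hreg
  rw [IsLocalization.AtPrime.ringKrullDim_eq_height P (Localization.AtPrime P),
    List.length_map] at hdim
  have : Nontrivial (Localization.AtPrime P ⧸
      Ideal.ofList (rs.map (algebraMap R (Localization.AtPrime P)))) := by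
    simpa using hreg.quot_ofList_smul_nontrivial ⊤
  exact_mod_cast (le_add_of_nonneg_left ringKrullDim_nonneg_of_nontrivial).trans_eq hdim

lemma exists_notMem_ofList_forall_mul_mem {xs : List R} (hxs : IsWeaklyRegular R xs)
    {I : Ideal R} (hmem : ∀ x ∈ xs, x ∈ I) (hlen : I.height = xs.length) :
    ∃ a ∉ Ideal.ofList xs, ∀ r ∈ I, r * a ∈ Ideal.ofList xs := by
  by_contra! hcon
  have hsub : Subsingleton ((R ⧸ I) →ₗ[R] R ⧸ Ideal.ofList xs) := by
    refine subsingleton_of_forall_eq 0 fun f ↦ ?_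
    obtain ⟨a, ha⟩ := Submodule.Quotient.mk_surjective _ (f (Submodule.Quotient.mk 1))
    have ha0 : a ∈ Ideal.ofList xs := by
      by_contra hax
      obtain ⟨r, hr, hra⟩ := hcon a hax
      exact hra (mul_mem_of_linearMap_quotient f ha hr)
    refine Submodule.linearMap_qext _ (LinearMap.ext_ring ?_)
    exact ha.symm.trans ((Submodule.Quotient.mk_eq_zero _).2 ha0)
  obtain ⟨x, hx, hreg⟩ := IsSMulRegular.subsingleton_linearMap_iff.1 hsub
  rw [Ideal.annihilator_quotient] at hx
  rw [← ofList_smul_top] at hreg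
  have hcons : IsWeaklyRegular R (xs ++ [x]) :=
    (isWeaklyRegular_append_iff R xs [x]).2 ⟨hxs, (isWeaklyRegular_singleton_iff _ _).2 hreg⟩
  have hle := length_le_height_of_isWeaklyRegular hcons
    (List.forall_mem_append.2 ⟨hmem, List.forall_mem_singleton.2 hx⟩)
  rw [hlen, List.length_append, List.length_singleton] at hle
  exact (Nat.lt_succ_self _).not_ge (by exact_mod_cast hle)

variable [IsLocalRing R]

lemma exists_notMem_sup_maximalIdeal_pow {J : Ideal R} {a : R} (ha : a ∉ J) :
    ∃ s ≠ 0, a ∉ J ⊔ maximalIdeal R ^ s := by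
  by_contra! hcon
  have hmem : (Submodule.Quotient.mk a : R ⧸ J) ∈
      (⨅ s : ℕ, maximalIdeal R ^ s • ⊤ : Submodule R (R ⧸ J)) := by
    refine Submodule.mem_iInf _ |>.2 fun s ↦ ?_
    obtain ⟨b, hb, c, hc, rfl⟩ := Submodule.mem_sup.1 (hcon (s + 1) s.succ_ne_zero)
    have hbc : (Submodule.Quotient.mk (b + c) : R ⧸ J) = c • Submodule.Quotient.mk 1 := by
      rw [Submodule.Quotient.mk_add, (Submodule.Quotient.mk_eq_zero _).2 hb, zero_add,
        ← Submodule.Quotient.mk_smul, smul_eq_mul, mul_one]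
    exact hbc ▸ Submodule.smul_mem_smul (Ideal.pow_le_pow_right s.le_succ hc) trivial
  rw [Ideal.iInf_pow_smul_eq_bot_of_isLocalRing _ (Ideal.IsPrime.ne_top inferInstance)] at hmem
  exact ha ((Submodule.Quotient.mk_eq_zero _).1 hmem)

lemma exists_maximalIdeal_pow_le_ofList {rs : List R} (h : IsWeaklyRegular R rs)
    (hmem : ∀ r ∈ rs, r ∈ maximalIdeal R) (hlen : ringKrullDim R = rs.length) :
    ∃ k, maximalIdeal R ^ k ≤ Ideal.ofList rs := by
  have hdim := ringKrullDim_add_length_eq_ringKrullDim_of_isRegular _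
    ((isRegular_iff_isWeaklyRegular_of_subset_maximalIdeal hmem).2 h)
  have hzero : ringKrullDim (R ⧸ Ideal.ofList rs) = 0 :=
    ENat.WithBot.add_natCast_cancel.1 (by rw [hdim, hlen, zero_add])
  have : Ring.KrullDimLE 0 (R ⧸ Ideal.ofList rs) := by
    rw [Ring.krullDimLE_iff, hzero]
    rfl
  have : IsArtinianRing (R ⧸ Ideal.ofList rs) := IsNoetherianRing.isArtinianRing_of_krullDimLE_zero
  exact exists_maximalIdeal_pow_le_of_isArtinianRing_quotient _

lemma IsCohenMacaulayLocalRing.depthGE {n : ℕ} (h : IsCohenMacaulayLocalRing R)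
    (hn : ringKrullDim R = n) : DepthGE R R n := by
  obtain ⟨rs, hmem, hrs, hlen⟩ := h
  obtain rfl : rs.length = n := by exact_mod_cast hlen.trans hn
  exact depthGE_length_of_isRegular hmem
    ((isRegular_iff_isWeaklyRegular_of_subset_maximalIdeal hmem).2 hrs)

theorem IsCohenMacaulayLocalRing.exists_isWeaklyRegular_append (h : IsCohenMacaulayLocalRing R)
    {I : Ideal R} {d e : ℕ} (hdim : ringKrullDim R = (d + e : ℕ))
    (hht : I.height = d) :
    ∃ (xs ys : List R) (a : R), xs.length = d ∧ ys.length = e ∧ (∀ r ∈ xs, r ∈ I) ∧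
      (∀ r ∈ ys, r ∈ maximalIdeal R) ∧ IsWeaklyRegular R (xs ++ ys) ∧
      (∀ r ∈ I, r * a ∈ Ideal.ofList xs) ∧ a ∉ Ideal.ofList (xs ++ ys) := by
  have hIm : I ≤ maximalIdeal R := le_maximalIdeal fun htop ↦ by
    simp [htop] at hht
  have hcoht : ∀ P : PrimeSpectrum R, I ≤ P.asIdeal → Order.coheight P ≤ e := fun P hP ↦
    coheight_le_of_ringKrullDim_eq_add hdim
      (by rw [← hht, ← PrimeSpectrum.height_eq_orderHeight]; exact Ideal.height_mono hP)
  obtain ⟨xs, hxlen, hxI, hxs, hdepth⟩ := (h.depthGE hdim).exists_isWeaklyRegular hIm hcoht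
  obtain ⟨a, ha, haI⟩ := exists_notMem_ofList_forall_mul_mem hxs hxI (by rw [hht, hxlen])
  have : Nontrivial (R ⧸ (Ideal.ofList xs • ⊤ : Submodule R R)) :=
    Submodule.Quotient.nontrivial_iff.2 fun htop ↦
      ha (by rw [← ofList_smul_top, htop]; exact Submodule.mem_top)
  obtain ⟨s, hs, has⟩ := exists_notMem_sup_maximalIdeal_pow ha
  obtain ⟨ys, hylen, hym, hys⟩ := hdepth.exists_isRegular hs
  refine ⟨xs, ys, a, hxlen, hylen, hxI, fun r hr ↦ Ideal.pow_le_self hs (hym r hr),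
    (isWeaklyRegular_append_iff R xs ys).2 ⟨hxs, hys.toIsWeaklyRegular⟩, haI, fun hxy ↦ has ?_⟩
  rw [Ideal.ofList_append] at hxy
  exact sup_le_sup_left (Ideal.span_le.2 hym) _ hxy

end Selection

section LocalizedQuotient

variable {R : Type u} [CommRing R]

/-- The quotient `P_x / P`, that is, the top local cohomology module `H_{(x)}^1(P)` of `P` with
support in the principal ideal `(x)`. -/
abbrev LocalizedQuotient (x : R) (P : Type u) [AddCommGroup P] [Module R P] : Type u :=
  LocalizedModule (Submonoid.powers x) P ⧸
    LinearMap.range (LocalizedModule.mkLinearMap (Submonoid.powers x) P)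

namespace LocalizedQuotient

variable {P Q : Type u} [AddCommGroup P] [Module R P] [AddCommGroup Q] [Module R Q] (x : R)

/-- The map `p ↦ [p / x ^ k]` from `P` to `P_x / P`. -/
noncomputable def frac (k : ℕ) : P →ₗ[R] LocalizedQuotient x P :=
  Submodule.mkQ _ ∘ₗ LocalizedModule.divBy (⟨x ^ k, k, rfl⟩ : Submonoid.powers x) ∘ₗ
    LocalizedModule.mkLinearMap (Submonoid.powers x) P

lemma frac_apply (k : ℕ) (p : P) :
    frac x k p = Submodule.Quotient.mk
      (LocalizedModule.mk p (⟨x ^ k, k, rfl⟩ : Submonoid.powers x)) := by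
  simp only [frac, LinearMap.comp_apply, LocalizedModule.mkLinearMap_apply,
    LocalizedModule.divBy_apply, LocalizedModule.liftOn_mk, one_mul, Submodule.mkQ_apply]

lemma exists_frac_eq (q : LocalizedQuotient x P) : ∃ k p, frac x k p = q := by
  obtain ⟨q, rfl⟩ := Submodule.Quotient.mk_surjective _ q
  induction q with
  | h p s =>
    obtain ⟨_, k, rfl⟩ := s
    exact ⟨k, p, frac_apply x k p⟩

lemma frac_add_pow_smul (k l : ℕ) (p : P) : frac x (k + l) (x ^ l • p) = frac x k p := by
  rw [frac_apply, frac_apply]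
  congr 1
  rw [LocalizedModule.mk_eq]
  exact ⟨1, by simp only [one_smul, Submonoid.smul_def, smul_smul, pow_add]⟩

lemma smul_frac_succ (k : ℕ) (p : P) : x • frac x (k + 1) p = frac x k p := by
  rw [← frac_add_pow_smul x k 1 p, pow_one, map_smul]

lemma frac_zero (p : P) : frac x 0 p = 0 := by
  rw [frac_apply, Submodule.Quotient.mk_eq_zero]
  exact ⟨p, by simp [LocalizedModule.mkLinearMap_apply, LocalizedModule.mk_eq]⟩

lemma frac_pow_smul (k : ℕ) (p : P) : frac x k (x ^ k • p) = 0 := by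
  rw [← frac_zero x p, ← frac_add_pow_smul x 0 k p, zero_add]

lemma frac_eq_zero_iff (k : ℕ) (p : P) :
    frac x k p = 0 ↔ ∃ l p', x ^ l • x ^ k • p' = x ^ l • p := by
  constructor
  · intro h
    rw [frac_apply, Submodule.Quotient.mk_eq_zero] at h
    obtain ⟨p', hp'⟩ := h
    rw [LocalizedModule.mkLinearMap_apply, LocalizedModule.mk_eq] at hp'
    obtain ⟨⟨_, l, rfl⟩, hl⟩ := hp'
    exact ⟨l, p', by simpa only [Submonoid.smul_def, one_smul] using hl⟩
  · rintro ⟨l, p', h⟩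
    rw [← frac_add_pow_smul x k l, ← h, smul_smul, ← pow_add, add_comm l, frac_pow_smul]

lemma smul_surjective : Function.Surjective (LinearMap.lsmul R (LocalizedQuotient x P) x) := by
  intro q
  obtain ⟨k, p, rfl⟩ := exists_frac_eq x q
  exact ⟨frac x (k + 1) p, smul_frac_succ x k p⟩

lemma exists_pow_smul_eq_zero (q : LocalizedQuotient x P) : ∃ k : ℕ, x ^ k • q = 0 := by
  obtain ⟨k, p, rfl⟩ := exists_frac_eq x q
  exact ⟨k, by rw [← map_smul, frac_pow_smul]⟩

/-- The map `p̄ ↦ [p / x]` from `P / xP` to `P_x / P`. -/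
noncomputable def ofQuotSMulTop : QuotSMulTop x P →ₗ[R] LocalizedQuotient x P :=
  Submodule.liftQ _ (frac x 1) <| by
    rintro _ ⟨p, -, rfl⟩
    simpa using frac_pow_smul x 1 p

lemma ofQuotSMulTop_mk (p : P) :
    ofQuotSMulTop x (Submodule.Quotient.mk p) = frac x 1 p := rfl

variable {x}

lemma ofQuotSMulTop_injective (hx : IsSMulRegular P x) :
    Function.Injective (ofQuotSMulTop x : QuotSMulTop x P →ₗ[R] _) := by
  refine (injective_iff_map_eq_zero _).2 fun a ha ↦ ?_
  obtain ⟨p, rfl⟩ := Submodule.Quotient.mk_surjective _ a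
  obtain ⟨l, p', h⟩ := (frac_eq_zero_iff x 1 p).1 ha
  rw [Submodule.Quotient.mk_eq_zero, ← hx.pow l h, pow_one]
  exact Submodule.smul_mem_pointwise_smul _ _ _ trivial

lemma exact_ofQuotSMulTop_smul (hx : IsSMulRegular P x) :
    Function.Exact (ofQuotSMulTop x) (LinearMap.lsmul R (LocalizedQuotient x P) x) := by
  intro q
  constructor
  · obtain ⟨k, p, rfl⟩ := exists_frac_eq x q
    intro h
    rw [LinearMap.lsmul_apply, ← map_smul] at h
    obtain ⟨l, p', h⟩ := (frac_eq_zero_iff x k _).1 h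
    refine ⟨Submodule.Quotient.mk p', ?_⟩
    rw [ofQuotSMulTop_mk, ← frac_add_pow_smul x 1 k, add_comm, hx.pow l h,
      ← smul_frac_succ x k p, map_smul]
  · rintro ⟨a, rfl⟩
    obtain ⟨p, rfl⟩ := Submodule.Quotient.mk_surjective _ a
    rw [ofQuotSMulTop_mk, LinearMap.lsmul_apply, smul_frac_succ, frac_zero]

end LocalizedQuotient

lemma isWeaklyRegular_of_exact_smul {x : R} {rs : List R} {A Q : Type u} [AddCommGroup A]
    [Module R A] [AddCommGroup Q] [Module R Q] {f : A →ₗ[R] Q} (hf : Function.Injective f)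
    (hfx : Function.Exact f (LinearMap.lsmul R Q x))
    (hx : Function.Surjective (LinearMap.lsmul R Q x)) (hpow : ∀ q : Q, ∃ k : ℕ, x ^ k • q = 0)
    (h : IsWeaklyRegular A rs) : IsWeaklyRegular Q rs := by
  induction h generalizing Q with
  | nil => exact .nil R Q
  | cons r rs hr _ ih =>
    have hrQ : IsSMulRegular Q r := by
      refine isSMulRegular_iff_right_eq_zero_of_smul.2 fun q hq ↦ ?_
      obtain ⟨k, hk⟩ := hpow q
      induction k generalizing q with
      | zero => simpa using hk
      | succ k ihk =>
        have hxq : x • q = 0 := ihk (x • q) (by rw [smul_comm, hq, smul_zero])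
          (by rw [smul_smul, ← pow_succ, hk])
        obtain ⟨a, rfl⟩ := (hfx q).1 hxq
        have ha : r • a = 0 := hf (by rw [map_smul, hq, map_zero])
        rw [isSMulRegular_iff_right_eq_zero_of_smul.1 hr a ha, map_zero]
    have h0 : Function.Exact (0 : PUnit.{u + 1} →ₗ[R] _) f :=
      LinearMap.exact_zero_iff_injective _ f |>.2 hf
    refine .cons hrQ <| ih (f := QuotSMulTop.map r f) ?_ ?_ ?_ ?_
    · have := QuotSMulTop.map_first_exact_on_four_term_exact_of_isSMulRegular_last h0 hfx hrQ
      rw [map_zero] at this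
      exact (LinearMap.exact_zero_iff_injective _ _).1 this
    · exact QuotSMulTop.map_exact r hfx hx
    · exact QuotSMulTop.map_surjective r hx
    · intro b
      obtain ⟨q, rfl⟩ := Submodule.Quotient.mk_surjective _ b
      obtain ⟨k, hk⟩ := hpow q
      exact ⟨k, by rw [← Submodule.Quotient.mk_smul, hk, Submodule.Quotient.mk_zero]⟩

lemma isWeaklyRegular_localizedQuotient {P : Type u} [AddCommGroup P] [Module R P] {x : R}
    {rs : List R} (h : IsWeaklyRegular P (x :: rs)) :
    IsWeaklyRegular (LocalizedQuotient x P) rs := by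
  obtain ⟨hx, hrs⟩ := (isWeaklyRegular_cons_iff P x rs).1 h
  exact isWeaklyRegular_of_exact_smul (LocalizedQuotient.ofQuotSMulTop_injective hx)
    (LocalizedQuotient.exact_ofQuotSMulTop_smul hx) (LocalizedQuotient.smul_surjective x)
    (LocalizedQuotient.exists_pow_smul_eq_zero x) hrs

end LocalizedQuotient

section IteratedLocalizedQuotient

variable {R : Type u} [CommRing R]

namespace LocalizedQuotient

variable {A B C : Type u} [AddCommGroup A] [Module R A] [AddCommGroup B] [Module R B]
  [AddCommGroup C] [Module R C] (x : R)

variable {x} in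
lemma hom_ext {φ ψ : LocalizedQuotient x A →ₗ[R] B}
    (h : ∀ k a, φ (frac x k a) = ψ (frac x k a)) : φ = ψ := by
  refine LinearMap.ext fun q ↦ ?_
  obtain ⟨k, a, rfl⟩ := exists_frac_eq x q
  exact h k a

/-- The map `P_x / P → Q_x / Q` induced by a linear map `P → Q`. -/
noncomputable def map (f : A →ₗ[R] B) : LocalizedQuotient x A →ₗ[R] LocalizedQuotient x B :=
  Submodule.mapQ _ _
    (IsLocalizedModule.map (Submonoid.powers x) (LocalizedModule.mkLinearMap _ A)
      (LocalizedModule.mkLinearMap _ B) f) <| by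
    rintro _ ⟨a, rfl⟩
    exact ⟨f a, (IsLocalizedModule.map_apply ..).symm⟩

lemma map_frac (f : A →ₗ[R] B) (k : ℕ) (a : A) : map x f (frac x k a) = frac x k (f a) := by
  rw [frac_apply, frac_apply, map, Submodule.mapQ_apply, IsLocalizedModule.map_LocalizedModules]

variable {x} {f : A →ₗ[R] B} {g : B →ₗ[R] C}

lemma map_injective (hf : Function.Injective f) (hfg : Function.Exact f g)
    (hx : IsSMulRegular C x) : Function.Injective (map x f) := by
  refine (injective_iff_map_eq_zero _).2 fun q hq ↦ ?_
  obtain ⟨k, a, rfl⟩ := exists_frac_eq x q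
  rw [map_frac, frac_eq_zero_iff] at hq
  obtain ⟨l, b, hb⟩ := hq
  have hgb : g b = 0 := by
    refine hx.pow k (hx.pow l ?_)
    calc x ^ l • x ^ k • g b = g (x ^ l • x ^ k • b) := by simp only [map_smul]
      _ = x ^ l • x ^ k • (0 : C) := by
        rw [hb, map_smul, hfg.apply_apply_eq_zero]
        simp only [smul_zero]
  obtain ⟨a', rfl⟩ := (hfg b).1 hgb
  exact (frac_eq_zero_iff x k a).2 ⟨l, a', hf (by simpa only [map_smul] using hb)⟩

lemma map_surjective (hg : Function.Surjective g) : Function.Surjective (map x g) := by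
  intro q
  obtain ⟨k, c, rfl⟩ := exists_frac_eq x q
  obtain ⟨b, rfl⟩ := hg c
  exact ⟨frac x k b, map_frac x g k b⟩

lemma map_exact (hfg : Function.Exact f g) (hg : Function.Surjective g) :
    Function.Exact (map x f) (map x g) := by
  intro q
  constructor
  · intro hq
    obtain ⟨k, b, rfl⟩ := exists_frac_eq x q
    rw [map_frac, frac_eq_zero_iff] at hq
    obtain ⟨l, c, hc⟩ := hq
    obtain ⟨b', rfl⟩ := hg c
    obtain ⟨a, ha⟩ := (hfg (x ^ l • b - x ^ l • x ^ k • b')).1 <| by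
      rw [map_sub, map_smul, map_smul, map_smul, hc, sub_self]
    refine ⟨frac x (k + l) a, ?_⟩
    rw [map_frac, ha, map_sub, frac_add_pow_smul, smul_smul, ← pow_add, add_comm l,
      frac_pow_smul, sub_zero]
  · rintro ⟨q, rfl⟩
    obtain ⟨k, a, rfl⟩ := exists_frac_eq x q
    rw [map_frac, map_frac, hfg.apply_apply_eq_zero, map_zero]

variable (x) in
/-- The functor `P ↦ P_x / P`. -/
noncomputable abbrev functor : ModuleCat.{u} R ⥤ ModuleCat.{u} R where
  obj P := ModuleCat.of R (LocalizedQuotient x P)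
  map f := ModuleCat.ofHom (map x f.hom)
  map_id _ := ModuleCat.hom_ext <| hom_ext fun k p ↦ map_frac x _ k p
  map_comp f g := ModuleCat.hom_ext <| hom_ext fun k p ↦ (map_frac x _ k p).trans
    ((congrArg (map x g.hom) (map_frac x f.hom k p)).trans (map_frac x g.hom k _)).symm

instance (x : R) : (functor x).PreservesZeroMorphisms where
  map_zero _ _ := ModuleCat.hom_ext <| hom_ext fun k p ↦
    (map_frac x _ k p).trans (map_zero (frac x k))

end LocalizedQuotient

open LocalizedQuotient

/-- The iterated quotient `P ↦ (⋯((P_{x₁} / P)_{x₂} / (P_{x₁} / P))⋯)`. If `x₁, …, x_d` is weakly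
regular on `P`, this is the top local cohomology module `H_{(x₁, …, x_d)}^d(P)`. -/
noncomputable def iteratedQuotient : List R → ModuleCat.{u} R ⥤ ModuleCat.{u} R
  | [] => 𝟭 _
  | x :: rs => functor x ⋙ iteratedQuotient rs

/-- The natural map `p ↦ [p / (x₁ ⋯ x_d)]` from `P` to its iterated quotient. -/
noncomputable def toIteratedQuotient : (rs : List R) → (𝟭 _ ⟶ iteratedQuotient (R := R) rs)
  | [] => 𝟙 _
  | x :: rs =>
    { app P := ModuleCat.ofHom (frac x 1) ≫ (toIteratedQuotient rs).app _
      naturality P Q f := by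
        have hfrac : f ≫ ModuleCat.ofHom (frac x 1) =
            ModuleCat.ofHom (frac x 1) ≫ (functor x).map f := by
          ext p
          exact (map_frac x f.hom 1 p).symm
        have h := (toIteratedQuotient rs).naturality ((functor x).map f)
        exact (congrArg (· ≫ (toIteratedQuotient rs).app _) hfrac).trans
          (congrArg (ModuleCat.ofHom (frac x 1) ≫ ·) h) }

instance preservesZeroMorphisms_iteratedQuotient :
    (rs : List R) → (iteratedQuotient rs).PreservesZeroMorphisms
  | [] => inferInstanceAs (𝟭 _ : ModuleCat.{u} R ⥤ _).PreservesZeroMorphisms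
  | x :: rs =>
    have := preservesZeroMorphisms_iteratedQuotient rs
    inferInstanceAs (functor x ⋙ iteratedQuotient rs).PreservesZeroMorphisms

lemma shortExact_map_localizedQuotient {S : ShortComplex (ModuleCat.{u} R)} (hS : S.ShortExact)
    {x : R} (hx : IsSMulRegular S.X₃ x) : (S.map (functor x)).ShortExact where
  exact := (ShortComplex.ShortExact.moduleCat_exact_iff_function_exact _).2 <|
    map_exact ((ShortComplex.ShortExact.moduleCat_exact_iff_function_exact _).1 hS.exact)
      hS.moduleCat_surjective_g
  mono_f := (ModuleCat.mono_iff_injective _).2 <| map_injective hS.moduleCat_injective_f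
    ((ShortComplex.ShortExact.moduleCat_exact_iff_function_exact _).1 hS.exact) hx
  epi_g := (ModuleCat.epi_iff_surjective _).2 <| map_surjective hS.moduleCat_surjective_g

lemma shortExact_map_iteratedQuotient {S : ShortComplex (ModuleCat.{u} R)} (hS : S.ShortExact)
    {rs : List R} (h : IsWeaklyRegular S.X₃ rs) : (S.map (iteratedQuotient rs)).ShortExact := by
  induction rs generalizing S with
  | nil => exact hS
  | cons x rs ih =>
    exact ih (shortExact_map_localizedQuotient hS ((isWeaklyRegular_cons_iff _ _ _).1 h).1)
      (isWeaklyRegular_localizedQuotient h)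

lemma isWeaklyRegular_iteratedQuotient {P : ModuleCat.{u} R} {xs ys : List R}
    (h : IsWeaklyRegular P (xs ++ ys)) : IsWeaklyRegular ((iteratedQuotient xs).obj P) ys := by
  induction xs generalizing P with
  | nil => exact h
  | cons x xs ih => exact ih (P := (functor x).obj P) (isWeaklyRegular_localizedQuotient h)

lemma toIteratedQuotient_smul_eq_zero {P : ModuleCat.{u} R} {rs : List R} {r : R}
    (hr : r ∈ Ideal.ofList rs) (p : P) : (toIteratedQuotient rs).app P (r • p) = 0 := by
  induction rs generalizing P r with
  | nil =>
    obtain rfl : r = 0 := by simpa using hr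
    rw [zero_smul, map_zero]
  | cons x rs ih =>
    rw [Ideal.ofList_cons, Submodule.mem_sup] at hr
    obtain ⟨_, hs, r, hr, rfl⟩ := hr
    obtain ⟨s, rfl⟩ := Ideal.mem_span_singleton'.1 hs
    have hfrac : frac x 1 ((s * x + r) • p) = r • frac x 1 p := by
      have hx : frac x 1 (x • p) = 0 := by simpa using frac_pow_smul x 1 p
      rw [add_smul, mul_smul, map_add, map_smul, hx, smul_zero, zero_add, map_smul]
    exact (congrArg _ hfrac).trans (ih (P := (functor x).obj P) hr (frac x 1 p))

/-- The sequence `0 ⟶ P / xP ⟶ P_x / P ⟶ P_x / P ⟶ 0` whose last map is multiplication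
by `x`. -/
noncomputable abbrev localizedQuotientShortComplex (x : R) (P : ModuleCat.{u} R) :
    ShortComplex (ModuleCat.{u} R) where
  X₁ := ModuleCat.of R (QuotSMulTop x P)
  X₂ := (functor x).obj P
  X₃ := (functor x).obj P
  f := ModuleCat.ofHom (ofQuotSMulTop x)
  g := ModuleCat.ofHom (LinearMap.lsmul R _ x)
  zero := by
    ext p
    exact (smul_frac_succ x 0 p).trans (frac_zero x p)

lemma localizedQuotientShortComplex_shortExact {x : R} {P : ModuleCat.{u} R}
    (hx : IsSMulRegular P x) : (localizedQuotientShortComplex x P).ShortExact where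
  exact := (ShortComplex.ShortExact.moduleCat_exact_iff_function_exact _).2 <|
    exact_ofQuotSMulTop_smul hx
  mono_f := (ModuleCat.mono_iff_injective _).2 <| ofQuotSMulTop_injective hx
  epi_g := (ModuleCat.epi_iff_surjective _).2 <| smul_surjective x

lemma mem_of_toIteratedQuotient_eq_zero {P : ModuleCat.{u} R} {rs : List R}
    (h : IsWeaklyRegular P rs) {p : P} (hp : (toIteratedQuotient rs).app P p = 0) :
    p ∈ (Ideal.ofList rs • ⊤ : Submodule R P) := by
  induction rs generalizing P with
  | nil =>
    obtain rfl : p = 0 := hp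
    exact zero_mem _
  | cons x rs ih =>
    obtain ⟨hx, hrs⟩ := (isWeaklyRegular_cons_iff P x rs).1 h
    let S := localizedQuotientShortComplex x P
    have hS := shortExact_map_iteratedQuotient (localizedQuotientShortComplex_shortExact hx)
      (isWeaklyRegular_localizedQuotient h)
    let p' : S.X₁ := Submodule.Quotient.mk p
    have hp' : (toIteratedQuotient rs).app S.X₁ p' = 0 := by
      refine (injective_iff_map_eq_zero _).1 hS.moduleCat_injective_f _ ?_
      exact (congr($((toIteratedQuotient rs).naturality S.f) p')).symm.trans hp
    have hmem : p' ∈ (Ideal.ofList rs • ⊤ : Submodule R P).map (x • (⊤ : Submodule R P)).mkQ := by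
      rw [Submodule.map_smul'', Submodule.map_top, Submodule.range_mkQ]
      exact ih hrs hp'
    rw [Ideal.ofList_cons_smul, ← Submodule.comap_map_mkQ]
    exact hmem

lemma toIteratedQuotient_append_eq_zero_iff {P : ModuleCat.{u} R} {xs ys : List R} {p : P} :
    (toIteratedQuotient (xs ++ ys)).app P p = 0 ↔
      (toIteratedQuotient ys).app _ ((toIteratedQuotient xs).app P p) = 0 := by
  induction xs generalizing P with
  | nil => exact Iff.rfl
  | cons x _ ih => exact ih (P := (functor x).obj P) (p := frac x 1 p)

end IteratedLocalizedQuotient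

section ExtClass

open Abelian LocalizedQuotient

variable {R : Type u} [CommRing R]

/-- The sequence `0 ⟶ P ⟶ P_x ⟶ P_x / P ⟶ 0`. -/
noncomputable abbrev localizationShortComplex (x : R) (P : ModuleCat.{u} R) :
    ShortComplex (ModuleCat.{u} R) where
  X₁ := P
  X₂ := ModuleCat.of R (LocalizedModule (Submonoid.powers x) P)
  X₃ := (functor x).obj P
  f := ModuleCat.ofHom (LocalizedModule.mkLinearMap (Submonoid.powers x) P)
  g := ModuleCat.ofHom (Submodule.mkQ _)
  zero := by
    ext p
    exact (Submodule.Quotient.mk_eq_zero _).2 ⟨p, rfl⟩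

lemma localizationShortComplex_shortExact {x : R} {P : ModuleCat.{u} R}
    (hx : IsSMulRegular P x) : (localizationShortComplex x P).ShortExact where
  exact := (ShortComplex.ShortExact.moduleCat_exact_iff_function_exact _).2 <|
    LinearMap.exact_map_mkQ_range _
  mono_f := by
    refine (ModuleCat.mono_iff_injective _).2 <| (injective_iff_map_eq_zero _).2 fun p hp ↦ ?_
    obtain ⟨⟨_, k, rfl⟩, hk⟩ := (IsLocalizedModule.eq_zero_iff (Submonoid.powers x)
      (LocalizedModule.mkLinearMap (Submonoid.powers x) P)).1 hp
    exact hx.pow k (hk.trans (smul_zero _).symm)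
  epi_g := (ModuleCat.epi_iff_surjective _).2 <| Submodule.mkQ_surjective _

/-- The map of sequences `0 ⟶ P ⟶ P_x ⟶ P_x / P ⟶ 0` induced by a linear map. -/
noncomputable def localizationShortComplexMap (x : R) {P Q : ModuleCat.{u} R} (f : P ⟶ Q) :
    localizationShortComplex x P ⟶ localizationShortComplex x Q where
  τ₁ := f
  τ₂ := ModuleCat.ofHom (IsLocalizedModule.map (Submonoid.powers x)
    (LocalizedModule.mkLinearMap _ P) (LocalizedModule.mkLinearMap _ Q) f.hom)
  τ₃ := (functor x).map f
  comm₁₂ := by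
    ext p
    exact (IsLocalizedModule.map_apply (Submonoid.powers x)
      (LocalizedModule.mkLinearMap _ P) (LocalizedModule.mkLinearMap _ Q) f.hom p).symm

lemma ext_eq_zero_of_smul_id_eq_zero {C : Type*} [Category* C] [Abelian C] [Linear R C] [HasExt C]
    {X Y : C} {r : R} (hX : r • 𝟙 X = 0) (hY : IsIso (r • 𝟙 Y)) {i : ℕ} (α : Ext X Y i) :
    α = 0 := by
  have hα : α.comp (Ext.mk₀ (r • 𝟙 Y)) (add_zero i) = 0 := by
    have : r • α = (Ext.mk₀ (r • 𝟙 X)).comp α (zero_add i) := by simp [Ext.mk₀_smul]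
    simpa [Ext.mk₀_smul, hX] using this
  calc α = (α.comp (Ext.mk₀ (r • 𝟙 Y)) (add_zero i)).comp (Ext.mk₀ (inv (r • 𝟙 Y)))
        (add_zero i) := by
        rw [Ext.comp_assoc_of_third_deg_zero, Ext.mk₀_comp_mk₀, IsIso.hom_inv_id,
          Ext.comp_mk₀_id]
    _ = 0 := by rw [hα, Ext.zero_comp]

lemma bijective_comp_extClass {C : Type*} [Category* C] [Abelian C] [HasExt C]
    {S : ShortComplex C} (hS : S.ShortExact) {X : C} {i j : ℕ} (hij : i + 1 = j)
    (h : ∀ k (α : Ext X S.X₂ k), α = 0) :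
    Function.Bijective fun α : Ext X S.X₃ i ↦ α.comp hS.extClass hij := by
  constructor
  · refine (injective_iff_map_eq_zero (hS.extClass.postcomp X hij)).2 fun α hα ↦ ?_
    obtain ⟨β, rfl⟩ := Ext.covariant_sequence_exact₃ X hS α hij hα
    rw [h _ β, Ext.zero_comp]
  · intro β
    exact Ext.covariant_sequence_exact₁ X hS β (h _ _) hij

lemma isIso_pow_smul_id_localizedModule (x : R) (k : ℕ) (P : Type u) [AddCommGroup P]
    [Module R P] :
    IsIso (x ^ k • 𝟙 (ModuleCat.of R (LocalizedModule (Submonoid.powers x) P))) := by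
  refine ⟨ModuleCat.ofHom (LocalizedModule.divBy (⟨x ^ k, k, rfl⟩ : Submonoid.powers x)), ?_, ?_⟩
  · ext p
    exact LocalizedModule.divBy_mul_by (⟨x ^ k, k, rfl⟩ : Submonoid.powers x) _
  · ext p
    exact LocalizedModule.mul_by_divBy (⟨x ^ k, k, rfl⟩ : Submonoid.powers x) _

/-- The Yoneda product of the extension classes of `0 ⟶ P ⟶ P_x ⟶ P_x / P ⟶ 0` along a weakly
regular sequence; it represents `Extᵈ(X, P)` for all `X` killed by powers of the sequence. -/
noncomputable def iteratedExtClass : (rs : List R) → (P : ModuleCat.{u} R) →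
    IsWeaklyRegular P rs → Ext ((iteratedQuotient rs).obj P) P rs.length
  | [], P, _ => Ext.mk₀ (𝟙 P)
  | x :: rs, P, h => (iteratedExtClass rs ((functor x).obj P)
      (isWeaklyRegular_localizedQuotient h)).comp (localizationShortComplex_shortExact
        ((isWeaklyRegular_cons_iff P x rs).1 h).1).extClass rfl

lemma bijective_comp_iteratedExtClass {rs : List R} {P X : ModuleCat.{u} R}
    (h : IsWeaklyRegular P rs) (hX : ∀ r ∈ rs, ∃ k : ℕ, r ^ k ∈ Module.annihilator R X) :
    Function.Bijective fun f : X ⟶ (iteratedQuotient rs).obj P ↦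
      (Ext.mk₀ f).comp (iteratedExtClass rs P h) (zero_add _) := by
  induction rs generalizing P with
  | nil =>
    exact (congrArg Function.Bijective (funext fun f ↦ (Ext.comp_mk₀_id (Ext.mk₀ f)).symm)).mp
      (Ext.mk₀_bijective X P)
  | cons x rs ih =>
    obtain ⟨k, hk⟩ := hX x List.mem_cons_self
    have hX0 : x ^ k • 𝟙 X = 0 := by
      rw [← ModuleCat.lsmul_eq_smul_id, Module.mem_annihilator_iff_lsmul_eq_zero.mp hk]
      rfl
    have hcomp := (bijective_comp_extClass
      (localizationShortComplex_shortExact ((isWeaklyRegular_cons_iff P x rs).1 h).1) rfl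
      fun _ ↦ ext_eq_zero_of_smul_id_eq_zero (R := R) hX0
        (isIso_pow_smul_id_localizedModule x k P)).comp
      (ih (isWeaklyRegular_localizedQuotient h) fun r hr ↦ hX r (List.mem_cons_of_mem x hr))
    refine (congrArg Function.Bijective (funext fun f ↦ ?_)).mp hcomp
    exact Ext.comp_assoc (a := rs.length + 1) (Ext.mk₀ f) _ _ (zero_add _) rfl (by omega)

lemma iteratedExtClass_naturality {rs : List R} {P Q : ModuleCat.{u} R} (f : P ⟶ Q)
    (hP : IsWeaklyRegular P rs) (hQ : IsWeaklyRegular Q rs) :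
    (iteratedExtClass rs P hP).comp (Ext.mk₀ f) (add_zero _) =
      (Ext.mk₀ ((iteratedQuotient rs).map f)).comp (iteratedExtClass rs Q hQ) (zero_add _) := by
  induction rs generalizing P Q with
  | nil =>
    exact (Ext.mk₀_id_comp _).trans (Ext.comp_mk₀_id _).symm
  | cons x rs ih =>
    let θP := iteratedExtClass rs ((functor x).obj _) (isWeaklyRegular_localizedQuotient hP)
    let θQ := iteratedExtClass rs ((functor x).obj _) (isWeaklyRegular_localizedQuotient hQ)
    have hSP := localizationShortComplex_shortExact ((isWeaklyRegular_cons_iff P x rs).1 hP).1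
    have hSQ := localizationShortComplex_shortExact ((isWeaklyRegular_cons_iff Q x rs).1 hQ).1
    let g := (functor x).map f
    calc (θP.comp hSP.extClass rfl).comp (Ext.mk₀ f) (add_zero _)
        = θP.comp (hSP.extClass.comp (Ext.mk₀ f) (add_zero 1)) rfl :=
          Ext.comp_assoc _ _ _ _ _ (by omega)
      _ = θP.comp ((Ext.mk₀ g).comp hSQ.extClass (zero_add 1)) rfl :=
          congrArg (θP.comp · rfl) (ShortComplex.ShortExact.extClass_naturality hSP hSQ
            (localizationShortComplexMap x f))
      _ = (θP.comp (Ext.mk₀ g) (add_zero _)).comp hSQ.extClass rfl :=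
          (Ext.comp_assoc _ _ _ _ _ (by omega)).symm
      _ = ((Ext.mk₀ ((iteratedQuotient rs).map g)).comp θQ (zero_add _)).comp hSQ.extClass rfl :=
          congrArg (Ext.comp · hSQ.extClass rfl) (ih g _ _)
      _ = (Ext.mk₀ ((iteratedQuotient rs).map g)).comp (θQ.comp hSQ.extClass rfl) (zero_add _) :=
          Ext.comp_assoc _ _ _ _ _ (by omega)

end ExtClass

section ExtComparison

open Abelian HomologicalComplex

universe w v u'

variable {R : Type*} [CommRing R] {C : Type u'} [Category.{v} C] [Abelian C] [Linear R C]
  {X X' Y : C} {P : ProjectiveResolution X} {P' : ProjectiveResolution X'} {g : X' ⟶ X} {n : ℕ}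

variable (R Y) in
/-- The cochain map `Hom(P, Y) ⟶ Hom(P', Y)` given by precomposition with a chain map `P' ⟶ P`. -/
noncomputable def linearYonedaObjMap {K K' : ChainComplex C ℕ} (φ : K' ⟶ K) :
    K.linearYonedaObj R Y ⟶ K'.linearYonedaObj R Y :=
  (unopFunctor _ _).map
    ((((linearYoneda R C).obj Y).rightOp.mapHomologicalComplex (ComplexShape.down ℕ)).map φ).op

lemma homologyMap_linearYonedaObjMap {K K' : ChainComplex C ℕ} (φ : K' ⟶ K) :
    homologyMap (linearYonedaObjMap R Y φ) n ≫ (homologyUnop _ n).hom =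
      (homologyUnop _ n).hom ≫
        (homologyMap ((((linearYoneda R C).obj Y).rightOp.mapHomologicalComplex
          (ComplexShape.down ℕ)).map φ) n).unop :=
  congrArg Quiver.Hom.unop (homologyOp_hom_naturality (linearYonedaObjMap R Y φ) n).symm

variable (R) in
/-- A cycle of the complex `Hom(P, Y)`, as a morphism `P.complex.X n ⟶ Y`. -/
noncomputable def cocycleHom (P : ProjectiveResolution X) (Y : C) (n : ℕ) :
    (P.complex.linearYonedaObj R Y).cycles n →ₗ[R] (P.complex.X n ⟶ Y) :=
  ((P.complex.linearYonedaObj R Y).iCycles n).hom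

lemma d_comp_cocycleHom (z : (P.complex.linearYonedaObj R Y).cycles n) :
    P.complex.d (n + 1) n ≫ cocycleHom R P Y n z = 0 :=
  congr($((P.complex.linearYonedaObj R Y).iCycles_d n (n + 1)) z)

lemma cocycleHom_injective : Function.Injective (cocycleHom R P Y n) :=
  (ModuleCat.mono_iff_injective ((P.complex.linearYonedaObj R Y).iCycles n)).1 inferInstance

lemma cocycleHom_toCycles (f : P.complex.X n ⟶ Y) :
    cocycleHom R P Y (n + 1) ((P.complex.linearYonedaObj R Y).toCycles n (n + 1) f) =
      P.complex.d (n + 1) n ≫ f :=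
  congr($((P.complex.linearYonedaObj R Y).toCycles_i n (n + 1)) f)

lemma cocycleHom_cyclesMap (φ : P'.complex ⟶ P.complex)
    (z : (P.complex.linearYonedaObj R Y).cycles n) :
    cocycleHom R P' Y n (cyclesMap (linearYonedaObjMap R Y φ) n z) =
      φ.f n ≫ cocycleHom R P Y n z :=
  congr($(cyclesMap_i (linearYonedaObjMap R Y φ) n) z)

variable (R) in
lemma exists_cocycleHom_eq (f : P.complex.X n ⟶ Y) (hf : P.complex.d (n + 1) n ≫ f = 0) :
    ∃ z, cocycleHom R P Y n z = f :=
  let K := P.complex.linearYonedaObj R Y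
  (ShortComplex.moduleCat_exact_iff (.mk (K.iCycles n) (K.d n (n + 1)) (K.iCycles_d n (n + 1)))).1
    (ShortComplex.exact_of_f_is_kernel _ (K.cyclesIsKernel n (n + 1) (by simp))) f hf

section CycleClass

variable [EnoughProjectives C]

lemma isoExt_inv_naturality (φ : ProjectiveResolution.Hom P' P g) :
    (P.isoExt n Y).inv ≫ ((Ext R C n).map g.op).app Y =
      homologyMap (linearYonedaObjMap R Y φ.hom) n ≫ (P'.isoExt n Y).inv := by
  have comm : φ.hom.f 0 ≫ P.π.f 0 = P'.π.f 0 ≫ g :=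
    φ.hom_f_zero_comp_π_f_zero.trans
      (congrArg (P'.π.f 0 ≫ ·) (ChainComplex.single₀_map_f_zero g))
  have hn := congrArg Quiver.Hom.unop (ProjectiveResolution.isoLeftDerivedObj_hom_naturality g
    P' P φ.hom comm ((linearYoneda R C).obj Y).rightOp n)
  refine (Category.assoc _ _ _).trans ?_
  refine (congrArg ((homologyUnop _ n).hom ≫ ·) hn).trans ?_
  exact (congrArg (· ≫ (P'.isoLeftDerivedObj ((linearYoneda R C).obj Y).rightOp n).hom.unop)
    (homologyMap_linearYonedaObjMap φ.hom).symm).trans (Category.assoc _ _ _)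

/-- The class in `Ext R C n` of a cocycle of `Hom(P, Y)`, for a projective resolution `P`. -/
noncomputable def extOfCycle (P : ProjectiveResolution X) (Y : C) (n : ℕ) :
    (P.complex.linearYonedaObj R Y).cycles n ⟶ ((Ext R C n).obj (op X)).obj Y :=
  (P.complex.linearYonedaObj R Y).homologyπ n ≫ (P.isoExt n Y).inv

lemma extOfCycle_surjective : Function.Surjective (extOfCycle (R := R) P Y n) := by
  rw [← ModuleCat.epi_iff_surjective, extOfCycle]
  infer_instance

lemma extOfCycle_naturality (φ : ProjectiveResolution.Hom P' P g) :
    extOfCycle P Y n ≫ ((Ext R C n).map g.op).app Y =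
      cyclesMap (linearYonedaObjMap R Y φ.hom) n ≫ extOfCycle P' Y n := by
  rw [extOfCycle, extOfCycle, Category.assoc, isoExt_inv_naturality, homologyπ_naturality_assoc]

lemma extOfCycle_eq_zero_iff (z : (P.complex.linearYonedaObj R Y).cycles n) :
    extOfCycle P Y n z = 0 ↔ (P.complex.linearYonedaObj R Y).homologyπ n z = 0 :=
  (P.isoExt n Y).toLinearEquiv.symm.map_eq_zero_iff

lemma extOfCycle_zero_eq_zero_iff (z : (P.complex.linearYonedaObj R Y).cycles 0) :
    extOfCycle P Y 0 z = 0 ↔ cocycleHom R P Y 0 z = 0 := by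
  rw [extOfCycle_eq_zero_iff, map_eq_zero_iff _ cocycleHom_injective]
  exact map_eq_zero_iff ((P.complex.linearYonedaObj R Y).homologyπ 0).hom
    ((ModuleCat.mono_iff_injective _).1 inferInstance)

lemma extOfCycle_succ_eq_zero_iff (z : (P.complex.linearYonedaObj R Y).cycles (n + 1)) :
    extOfCycle P Y (n + 1) z = 0 ↔
      ∃ f : P.complex.X n ⟶ Y, P.complex.d (n + 1) n ≫ f = cocycleHom R P Y (n + 1) z := by
  let K := P.complex.linearYonedaObj R Y
  have hK : (ShortComplex.mk _ _ (K.toCycles_comp_homologyπ n (n + 1))).Exact :=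
    ShortComplex.exact_of_g_is_cokernel _ (K.homologyIsCokernel n (n + 1) (by simp))
  rw [extOfCycle_eq_zero_iff]
  constructor
  · intro hz
    obtain ⟨f, hf⟩ := (ShortComplex.moduleCat_exact_iff _).1 hK z hz
    exact ⟨f, (cocycleHom_toCycles f).symm.trans (congrArg _ hf)⟩
  · rintro ⟨f, hf⟩
    rw [← cocycleHom_injective ((cocycleHom_toCycles f).trans hf)]
    exact congr($(K.toCycles_comp_homologyπ n (n + 1)) f)

lemma ext_map_smul_id (r : R) (α : ((Ext R C n).obj (op X)).obj Y) :
    ((Ext R C n).map (r • 𝟙 X).op).app Y α = r • α := by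
  let P := projectiveResolution X
  obtain ⟨z, rfl⟩ := extOfCycle_surjective (P := P) α
  let φ : ProjectiveResolution.Hom P P (r • 𝟙 X) :=
    { hom := r • 𝟙 P.complex
      hom_f_zero_comp_π_f_zero :=
        ((Linear.smul_comp _ _ _ r (𝟙 _) (P.π.f 0)).trans
          (congrArg (r • ·) ((Category.id_comp _).trans (Category.comp_id _).symm))).trans
          ((Linear.comp_smul _ _ _ (P.π.f 0) r (𝟙 X)).symm.trans
            (congrArg (P.π.f 0 ≫ ·) (ChainComplex.single₀_map_f_zero (r • 𝟙 X)).symm)) }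
  have hz : cyclesMap (linearYonedaObjMap R Y φ.hom) n z = r • z := cocycleHom_injective <| by
    rw [cocycleHom_cyclesMap, map_smul]
    simp [φ]
  rw [← map_smul, ← hz]
  exact congr($(extOfCycle_naturality φ) z)

end CycleClass

variable [HasExt.{w} C]

variable (R) in
/-- The class in `Abelian.Ext X Y n` of a cocycle of `Hom(P, Y)`, for a projective resolution
`P`. -/
noncomputable def abelianExtOfCycle (P : ProjectiveResolution X) (Y : C) (n : ℕ) :
    (P.complex.linearYonedaObj R Y).cycles n →+ Abelian.Ext X Y n :=
  AddMonoidHom.mk' (fun z ↦ P.extMk (cocycleHom R P Y n z) (n + 1) rfl (d_comp_cocycleHom z))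
    fun z z' ↦ by simp only [P.add_extMk, map_add]

lemma abelianExtOfCycle_apply (z : (P.complex.linearYonedaObj R Y).cycles n) :
    abelianExtOfCycle R P Y n z =
      P.extMk (cocycleHom R P Y n z) (n + 1) rfl (d_comp_cocycleHom z) :=
  rfl

lemma abelianExtOfCycle_surjective : Function.Surjective (abelianExtOfCycle R P Y n) := by
  intro α
  obtain ⟨f, hf, rfl⟩ := P.extMk_surjective α (n + 1) rfl
  obtain ⟨z, rfl⟩ := exists_cocycleHom_eq R f hf
  exact ⟨z, rfl⟩

lemma abelianExtOfCycle_naturality (φ : ProjectiveResolution.Hom P' P g)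
    (z : (P.complex.linearYonedaObj R Y).cycles n) :
    abelianExtOfCycle R P' Y n (cyclesMap (linearYonedaObjMap R Y φ.hom) n z) =
      (Abelian.Ext.mk₀ g).comp (abelianExtOfCycle R P Y n z) (zero_add n) := by
  simp only [abelianExtOfCycle_apply, ProjectiveResolution.mk₀_comp_extMk _ _ _ _ φ,
    cocycleHom_cyclesMap]

lemma extMk_zero_eq_zero_iff (f : P.complex.X 0 ⟶ Y) (hf : P.complex.d 1 0 ≫ f = 0) :
    P.extMk f 1 rfl hf = 0 ↔ f = 0 := by
  refine ⟨fun h ↦ ?_, by rintro rfl; exact P.extMk_zero 1 rfl⟩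
  simp only [← P.extEquivCohomologyClass.apply_eq_iff_eq,
    ProjectiveResolution.extEquivCohomologyClass_extMk,
    ProjectiveResolution.extEquivCohomologyClass_zero,
    CochainComplex.HomComplex.CohomologyClass.mk_eq_zero_iff] at h
  rw [CochainComplex.HomComplex.Cocycle.toSingleMk_mem_coboundaries_iff _ _ _ _ _ 1 (by lia)] at h
  obtain ⟨g, hg⟩ := h
  have hd : P.cochainComplex.d (-(0 : ℕ)) 1 = 0 :=
    (P.cochainComplex.isZero_of_isStrictlyLE 0 1 (by lia)).eq_of_tgt _ _
  rw [hd, Limits.zero_comp] at hg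
  exact (Preadditive.IsIso.comp_left_eq_zero _ _).1 hg.symm

variable [EnoughProjectives C]

lemma abelianExtOfCycle_eq_zero_iff (z : (P.complex.linearYonedaObj R Y).cycles n) :
    abelianExtOfCycle R P Y n z = 0 ↔ extOfCycle P Y n z = 0 := by
  rw [abelianExtOfCycle_apply]
  cases n with
  | zero => rw [extOfCycle_zero_eq_zero_iff, extMk_zero_eq_zero_iff]
  | succ n => rw [extOfCycle_succ_eq_zero_iff, P.extMk_eq_zero_iff _ _ _ _ n rfl]

variable (R X Y n) in
/-- The canonical map to morphisms in the derived category from `Ext` constructed as a left derived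
functor of `Hom(-, Y)`. -/
noncomputable def extComparison : ((Ext R C n).obj (op X)).obj Y →+ Abelian.Ext X Y n :=
  (extOfCycle (projectiveResolution X) Y n).hom.toAddMonoidHom.liftOfSurjective
    extOfCycle_surjective
    ⟨abelianExtOfCycle R (projectiveResolution X) Y n,
      fun z ↦ (abelianExtOfCycle_eq_zero_iff z).2⟩

lemma extComparison_extOfCycle
    (z : ((projectiveResolution X).complex.linearYonedaObj R Y).cycles n) :
    extComparison R X Y n (extOfCycle _ Y n z) = abelianExtOfCycle R _ Y n z :=
  AddMonoidHom.liftOfRightInverse_comp_apply _ _ (Function.rightInverse_surjInv _) _ z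

variable (R X Y n) in
/-- The comparison between the two constructions of `Ext`: the left derived functor of
`Hom(-, Y)`, and morphisms in the derived category. -/
noncomputable def extAddEquiv : ((Ext R C n).obj (op X)).obj Y ≃+ Abelian.Ext X Y n :=
  AddEquiv.ofBijective (extComparison R X Y n) <| by
    constructor
    · rw [injective_iff_map_eq_zero]
      intro α hα
      obtain ⟨z, rfl⟩ := extOfCycle_surjective (P := projectiveResolution X) α
      rwa [extComparison_extOfCycle, abelianExtOfCycle_eq_zero_iff] at hα
    · intro α
      obtain ⟨z, rfl⟩ := abelianExtOfCycle_surjective (R := R) (P := projectiveResolution X) α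
      exact ⟨_, extComparison_extOfCycle z⟩

lemma extAddEquiv_map (g : X' ⟶ X) (α : ((Ext R C n).obj (op X)).obj Y) :
    extAddEquiv R X' Y n (((Ext R C n).map g.op).app Y α) =
      (Abelian.Ext.mk₀ g).comp (extAddEquiv R X Y n α) (zero_add n) := by
  obtain ⟨z, rfl⟩ := extOfCycle_surjective (P := projectiveResolution X) α
  let φ : ProjectiveResolution.Hom (projectiveResolution X') (projectiveResolution X) g :=
    { hom := ProjectiveResolution.lift g _ _
      hom_f_zero_comp_π_f_zero :=
        (ProjectiveResolution.lift_commutes_zero g _ _).trans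
          (congrArg (_ ≫ ·) (ChainComplex.single₀_map_f_zero g).symm) }
  have hφ : ((Ext R C n).map g.op).app Y (extOfCycle _ Y n z) =
      extOfCycle _ Y n (cyclesMap (linearYonedaObjMap R Y φ.hom) n z) :=
    congr($(extOfCycle_naturality φ) z)
  rw [hφ]
  exact (extComparison_extOfCycle _).trans ((abelianExtOfCycle_naturality φ z).trans
    (congrArg ((Abelian.Ext.mk₀ g).comp · (zero_add n)) (extComparison_extOfCycle z).symm))

end ExtComparison

section QuotientPowers

variable {R : Type u} [CommRing R] {J K : Ideal R} {N : ModuleCat.{u} R} {n : N}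

variable (J) in
/-- The transition map `R / Jᵗ ⟶ R / Jˢ` for `s ≤ t`. -/
noncomputable def quotientPowMap {s t : ℕ} (h : s ≤ t) :
    ModuleCat.of R (R ⧸ J ^ t) ⟶ ModuleCat.of R (R ⧸ J ^ s) :=
  ModuleCat.ofHom (Submodule.mapQ _ _ LinearMap.id (Ideal.pow_le_pow_right h))

lemma pow_mem_annihilator_quotient_pow {r : R} (hr : r ∈ J) (t : ℕ) :
    r ^ t ∈ Module.annihilator R (R ⧸ J ^ t) := by
  rw [Ideal.annihilator_quotient]
  exact Ideal.pow_mem_pow hr t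

/-- The morphism `R / K ⟶ N` sending `1` to an element `n` killed by `K`. -/
noncomputable def quotientHom (hn : ∀ r ∈ K, r • n = 0) : ModuleCat.of R (R ⧸ K) ⟶ N :=
  ModuleCat.ofHom (Submodule.liftQ K (LinearMap.toSpanSingleton R N n) hn)

lemma quotientHom_one (hn : ∀ r ∈ K, r • n = 0) : quotientHom hn (1 : R ⧸ K) = n :=
  one_smul R n

end QuotientPowers

section LocalCohomology

open Limits

variable {R : Type u} [CommRing R] {J : Ideal R} {i : ℕ} {Y N : ModuleCat.{u} R}

lemma exists_map_eq_zero_of_isColimit {D : Type} [SmallCategory D] [IsFiltered D]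
    {F : D ⥤ ModuleCat.{u} R} {c : Cocone F} (hc : IsColimit c) {j : D} {x : F.obj j}
    (hx : c.ι.app j x = 0) :
    ∃ (k : D) (f : j ⟶ k), F.map f x = 0 := by
  have := preservesSmallestFilteredColimits_of_preservesFilteredColimits (forget (ModuleCat.{u} R))
  obtain ⟨k, f, g, hfg⟩ := Concrete.isColimit_exists_of_rep_eq F hc x 0
    (hx.trans (map_zero (c.ι.app j).hom).symm)
  exact ⟨k, f, hfg.trans (map_zero (F.map g).hom)⟩

variable (J i Y) in
/-- The colimit cocone whose point is the local cohomology module `H_J^i(Y)`. -/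
noncomputable def localCohomologyCocone :
    Cocone (localCohomology.diagram (localCohomology.idealPowersDiagram J) i ⋙
      (evaluation _ _).obj Y) :=
  ((evaluation _ _).obj Y).mapCocone (colimit.cocone _)

variable (J i Y) in
/-- Evaluation at `Y` preserves colimits of functors. -/
noncomputable def isColimitLocalCohomologyCocone : IsColimit (localCohomologyCocone J i Y) :=
  isColimitOfPreserves ((evaluation _ _).obj Y) (colimit.isColimit _)

variable (J i Y) in
/-- The canonical map `Extⁱ(R / Jᵗ, Y) ⟶ H_J^i(Y)`. -/
noncomputable def toLocalCohomology (t : ℕ) :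
    ((Ext R (ModuleCat.{u} R) i).obj (op (ModuleCat.of R (R ⧸ J ^ t)))).obj Y ⟶
      (localCohomology J i).obj Y :=
  (localCohomologyCocone J i Y).ι.app (op (op t))

lemma exists_hom_localCohomology
    (ψ : ∀ t, ((Ext R (ModuleCat.{u} R) i).obj (op (ModuleCat.of R (R ⧸ J ^ t)))).obj Y ⟶ N)
    (hψ : ∀ {s t} (h : s ≤ t),
      ((Ext R (ModuleCat.{u} R) i).map (quotientPowMap J h).op).app Y ≫ ψ t = ψ s) :
    ∃ φ : (localCohomology J i).obj Y ⟶ N, ∀ t, toLocalCohomology J i Y t ≫ φ = ψ t :=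
  let c : Cocone (localCohomology.diagram (localCohomology.idealPowersDiagram J) i ⋙
      (evaluation _ _).obj Y) :=
    { pt := N
      ι :=
        { app t := ψ t.unop.unop
          naturality _ _ f := (hψ (leOfHom f.unop.unop)).trans (Category.comp_id _).symm } }
  ⟨(isColimitLocalCohomologyCocone J i Y).desc c,
    fun t ↦ (isColimitLocalCohomologyCocone J i Y).fac c (op (op t))⟩

lemma exists_map_eq_zero_of_toLocalCohomology_eq_zero {t : ℕ}
    {α : ((Ext R (ModuleCat.{u} R) i).obj (op (ModuleCat.of R (R ⧸ J ^ t)))).obj Y}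
    (hα : toLocalCohomology J i Y t α = 0) :
    ∃ (t' : ℕ) (h : t ≤ t'),
      ((Ext R (ModuleCat.{u} R) i).map (quotientPowMap J h).op).app Y α = 0 := by
  obtain ⟨t', f, hf⟩ := exists_map_eq_zero_of_isColimit (isColimitLocalCohomologyCocone J i Y) hα
  exact ⟨t'.unop.unop, leOfHom f.unop.unop, hf⟩

end LocalCohomology

section HomExt

open Abelian

variable {R : Type u} [CommRing R] {P X X' : ModuleCat.{u} R} {rs : List R}

variable (X) in
/-- The map `Hom(X, iteratedQuotient rs P) → Extᵈ(X, P)` given by the Yoneda product with the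
iterated extension class of a weakly regular sequence `rs` of length `d`. -/
noncomputable def homToExt (h : IsWeaklyRegular P rs) (f : X ⟶ (iteratedQuotient rs).obj P) :
    ((_root_.Ext R (ModuleCat.{u} R) rs.length).obj (op X)).obj P :=
  (extAddEquiv R X P rs.length).symm ((Ext.mk₀ f).comp (iteratedExtClass rs P h) (zero_add _))

lemma homToExt_comp (h : IsWeaklyRegular P rs) (g : X' ⟶ X)
    (f : X ⟶ (iteratedQuotient rs).obj P) :
    homToExt X' h (g ≫ f) =
      ((_root_.Ext R (ModuleCat.{u} R) rs.length).map g.op).app P (homToExt X h f) := by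
  rw [homToExt, AddEquiv.symm_apply_eq, extAddEquiv_map, homToExt, AddEquiv.apply_symm_apply,
    ← Ext.mk₀_comp_mk₀]
  exact Ext.comp_assoc _ _ _ _ _ (by omega)

/-- If powers of a weakly regular sequence `rs` of length `d` kill `X`, then
`Hom(X, iteratedQuotient rs P) ≅ Extᵈ(X, P)`. -/
noncomputable def homEquivExt (h : IsWeaklyRegular P rs)
    (hX : ∀ r ∈ rs, ∃ k : ℕ, r ^ k ∈ Module.annihilator R X) :
    (X ⟶ (iteratedQuotient rs).obj P) ≃ₗ[R]
      ((_root_.Ext R (ModuleCat.{u} R) rs.length).obj (op X)).obj P :=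
  LinearEquiv.ofBijective
    { toFun := homToExt X h
      map_add' f g := by
        simp only [homToExt, Ext.mk₀_add, Ext.add_comp, map_add]
      map_smul' r f := by
        rw [RingHom.id_apply, ← ext_map_smul_id, ← homToExt_comp, Linear.smul_comp,
          Category.id_comp] }
    ((extAddEquiv R X P _).symm.bijective.comp (bijective_comp_iteratedExtClass h hX))

end HomExt

section EdgeMap

open Abelian

variable {R : Type u} [CommRing R] {P : ModuleCat.{u} R} {rs : List R} {I : Ideal R}

variable (I) in
/-- The `R`-linear isomorphism `Hom(R / Iᵗ, iteratedQuotient rs P) ≅ Extᵈ(R / Iᵗ, P)`. -/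
noncomputable def homQuotientPowEquivExt (h : IsWeaklyRegular P rs) (hI : ∀ r ∈ rs, r ∈ I) (t : ℕ) :
    (ModuleCat.of R (R ⧸ I ^ t) ⟶ (iteratedQuotient rs).obj P) ≃ₗ[R]
      ((_root_.Ext R (ModuleCat.{u} R) rs.length).obj (op (ModuleCat.of R (R ⧸ I ^ t)))).obj P :=
  homEquivExt h fun r hr ↦ ⟨t, pow_mem_annihilator_quotient_pow (hI r hr) t⟩

lemma homQuotientPowEquivExt_symm_map (h : IsWeaklyRegular P rs) (hI : ∀ r ∈ rs, r ∈ I) {s t : ℕ}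
    (hst : s ≤ t)
    (α : ((_root_.Ext R (ModuleCat.{u} R) rs.length).obj (op (ModuleCat.of R (R ⧸ I ^ s)))).obj P) :
    (homQuotientPowEquivExt I h hI t).symm
        (((_root_.Ext R (ModuleCat.{u} R) rs.length).map (quotientPowMap I hst).op).app P α) =
      quotientPowMap I hst ≫ (homQuotientPowEquivExt I h hI s).symm α := by
  obtain ⟨f, rfl⟩ := (homQuotientPowEquivExt I h hI s).surjective α
  rw [LinearEquiv.symm_apply_eq, LinearEquiv.symm_apply_apply]
  exact (homToExt_comp h _ f).symm

/- The map is the natural one `H_I^d(P) ⟶ H_(rs)^d(P)`, where `d` is the length of `rs`. -/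
lemma exists_hom_localCohomology_iteratedQuotient (h : IsWeaklyRegular P rs)
    (hI : ∀ r ∈ rs, r ∈ I) :
    ∃ φ : (localCohomology I rs.length).obj P ⟶ (iteratedQuotient rs).obj P,
      ∀ t (f : ModuleCat.of R (R ⧸ I ^ t) ⟶ (iteratedQuotient rs).obj P),
        φ (toLocalCohomology I rs.length P t (homQuotientPowEquivExt I h hI t f)) =
          f (1 : R ⧸ I ^ t) := by
  obtain ⟨φ, hφ⟩ := exists_hom_localCohomology
    (fun t ↦ ModuleCat.ofHom <| LinearMap.comp
      { toFun := fun f : ModuleCat.of R (R ⧸ I ^ t) ⟶ (iteratedQuotient rs).obj P ↦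
          f (1 : R ⧸ I ^ t)
        map_add' _ _ := rfl
        map_smul' _ _ := rfl }
      (homQuotientPowEquivExt I h hI t).symm.toLinearMap)
    (fun {s t} hst ↦ by
      ext α
      exact congr($(homQuotientPowEquivExt_symm_map h hI hst α) (1 : R ⧸ I ^ t)))
  refine ⟨φ, fun t f ↦ congr($(hφ t) _).trans ?_⟩
  exact congr($((homQuotientPowEquivExt I h hI t).symm_apply_apply f) (1 : R ⧸ I ^ t))

lemma smul_toLocalCohomology_one_eq_zero {i : ℕ} {r : R} (hr : r ∈ I)
    (α : ((_root_.Ext R (ModuleCat.{u} R) i).obj (op (ModuleCat.of R (R ⧸ I ^ 1)))).obj P) :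
    r • toLocalCohomology I i P 1 α = 0 := by
  have hr0 : r • 𝟙 (ModuleCat.of R (R ⧸ I ^ 1)) = 0 := by
    rw [← ModuleCat.lsmul_eq_smul_id, Module.mem_annihilator_iff_lsmul_eq_zero.mp
      (by simpa using pow_mem_annihilator_quotient_pow hr 1)]
    rfl
  have h0 : (0 : R) • 𝟙 (ModuleCat.of R (R ⧸ I ^ 1)) = 0 := zero_smul _ _
  rw [← map_smul, ← ext_map_smul_id r α, hr0, ← h0, ext_map_smul_id 0 α, zero_smul, map_zero]

lemma exists_smul_eq_zero_and_apply_eq (h : IsWeaklyRegular P rs) (hI : ∀ r ∈ rs, r ∈ I) {p : P}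
    (hp : ∀ r ∈ I, r • (toIteratedQuotient rs).app P p = 0) :
    ∃ (φ : (localCohomology I rs.length).obj P ⟶ (iteratedQuotient rs).obj P)
      (c : (localCohomology I rs.length).obj P),
      φ c = (toIteratedQuotient rs).app P p ∧ ∀ r ∈ I, r • c = 0 := by
  obtain ⟨φ, hφ⟩ := exists_hom_localCohomology_iteratedQuotient h hI
  have hp' : ∀ r ∈ I ^ 1, r • (toIteratedQuotient rs).app P p = 0 := by rwa [pow_one]
  exact ⟨φ, toLocalCohomology I rs.length P 1 (homQuotientPowEquivExt I h hI 1 (quotientHom hp')),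
    (hφ 1 _).trans (quotientHom_one hp'), fun r hr ↦ smul_toLocalCohomology_one_eq_zero hr _⟩

end EdgeMap

section Nonvanishing

open Abelian

variable {R : Type u} [CommRing R] {xs ys : List R} {J : Ideal R}

lemma nontrivial_localCohomology_of_hom_comp {L M N : ModuleCat.{u} R} (hL : IsWeaklyRegular L ys)
    (hN : IsWeaklyRegular N ys) (hJ : ∀ r ∈ ys, r ∈ J) (f : L ⟶ M) (g : M ⟶ N) {k : ℕ}
    (e : ModuleCat.of R (R ⧸ J ^ k) ⟶ (iteratedQuotient ys).obj L)
    (he : (iteratedQuotient ys).map (f ≫ g) (e (1 : R ⧸ J ^ k)) ≠ 0) :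
    Nontrivial ((localCohomology J ys.length).obj M) := by
  let θL := iteratedExtClass ys L hL
  let θN := iteratedExtClass ys N hN
  let ξ := ((Ext.mk₀ e).comp θL (zero_add _)).comp (Ext.mk₀ f) (add_zero _)
  let α := (extAddEquiv R (ModuleCat.of R (R ⧸ J ^ k)) M ys.length).symm ξ
  refine ⟨toLocalCohomology J ys.length M k α, 0, fun hα ↦ he ?_⟩
  obtain ⟨t, hkt, ht⟩ := exists_map_eq_zero_of_toLocalCohomology_eq_zero hα
  let q := quotientPowMap J hkt
  have hξ : (Ext.mk₀ q).comp ξ (zero_add _) = 0 := by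
    rw [← (extAddEquiv R _ M ys.length).apply_symm_apply ξ, ← extAddEquiv_map, ht, map_zero]
  have hξg : ξ.comp (Ext.mk₀ g) (add_zero _) =
      (Ext.mk₀ (e ≫ (iteratedQuotient ys).map (f ≫ g))).comp θN (zero_add _) := by
    simp only [ξ, Ext.comp_assoc_of_third_deg_zero, Ext.mk₀_comp_mk₀]
    rw [iteratedExtClass_naturality (f ≫ g) hL hN, Ext.mk₀_comp_mk₀_assoc]
  have hq : q ≫ e ≫ (iteratedQuotient ys).map (f ≫ g) = 0 := by
    refine (bijective_comp_iteratedExtClass hN fun r hr ↦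
      ⟨t, pow_mem_annihilator_quotient_pow (hJ r hr) t⟩).1 ?_
    calc (Ext.mk₀ (q ≫ e ≫ (iteratedQuotient ys).map (f ≫ g))).comp θN (zero_add _)
        = (Ext.mk₀ q).comp (ξ.comp (Ext.mk₀ g) (add_zero _)) (zero_add _) := by
          rw [hξg, Ext.mk₀_comp_mk₀_assoc]
      _ = ((Ext.mk₀ q).comp ξ (zero_add _)).comp (Ext.mk₀ g) (add_zero _) :=
          (Ext.comp_assoc_of_third_deg_zero _ _ _ _).symm
      _ = (Ext.mk₀ 0).comp θN (zero_add _) := by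
          rw [hξ, Ext.zero_comp, Ext.mk₀_zero, Ext.zero_comp]
  exact congr($hq (1 : R ⧸ J ^ t))

lemma nontrivial_localCohomology_of_hom_iteratedQuotient (h : IsWeaklyRegular R (xs ++ ys))
    (hJ : ∀ r ∈ ys, r ∈ J) {k : ℕ} (hk : J ^ k ≤ Ideal.ofList (xs ++ ys)) {M : ModuleCat.{u} R}
    (φ : M ⟶ (iteratedQuotient xs).obj (ModuleCat.of R R)) {c : M}
    (hc : ∀ r ∈ Ideal.ofList xs, r • c = 0) {a : R}
    (hφ : φ c = (toIteratedQuotient xs).app (ModuleCat.of R R) a)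
    (ha : a ∉ Ideal.ofList (xs ++ ys)) :
    Nontrivial ((localCohomology J ys.length).obj M) := by
  let L := ModuleCat.of R (R ⧸ Ideal.ofList xs)
  have hL : IsWeaklyRegular L ys :=
    ((Submodule.quotEquivOfEq _ _ (ofList_smul_top xs)).isWeaklyRegular_congr ys).1
      ((isWeaklyRegular_append_iff R xs ys).1 h).2
  have hN := isWeaklyRegular_iteratedQuotient (P := ModuleCat.of R R) h
  let one : L := (1 : R ⧸ Ideal.ofList xs)
  have hone : ∀ r ∈ J ^ k, r • (toIteratedQuotient ys).app L one = 0 := by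
    intro r hr
    obtain ⟨s, hs, t, ht, rfl⟩ := Submodule.mem_sup.1 (Ideal.ofList_append (R := R) xs ys ▸ hk hr)
    have hs0 : s • one = 0 :=
      (Algebra.smul_def s _).trans ((mul_one _).trans (Ideal.Quotient.eq_zero_iff_mem.2 hs))
    rw [← map_smul, add_smul, hs0, zero_add]
    exact toIteratedQuotient_smul_eq_zero ht one
  refine nontrivial_localCohomology_of_hom_comp hL hN hJ (quotientHom hc) φ (quotientHom hone) ?_
  rw [quotientHom_one]
  intro h0
  have h1 : (toIteratedQuotient ys).app _
      ((toIteratedQuotient xs).app (ModuleCat.of R R) a) = 0 := by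
    rw [← hφ]
    refine Eq.trans ?_ h0
    refine (congrArg _ (congrArg φ (quotientHom_one hc).symm)).trans ?_
    exact congr($((toIteratedQuotient ys).naturality (quotientHom hc ≫ φ)) one)
  have hmem := mem_of_toIteratedQuotient_eq_zero h (toIteratedQuotient_append_eq_zero_iff.2 h1)
  exact ha (by simpa using hmem)

end Nonvanishing

section MainTheorem

lemma idealHeight_eq_height {R : Type} [CommRing R] (I : Ideal R) : idealHeight R I = I.height := by
  apply le_antisymm
  · exact le_iInf₂ fun p hp ↦ sInf_le ⟨⟨p, hp.isPrime⟩, hp.le, rfl⟩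
  · refine le_sInf ?_
    rintro _ ⟨p, hp, rfl⟩
    rw [← PrimeSpectrum.height_eq_orderHeight]
    exact Ideal.height_mono hp

lemma IsRegularLocal.isRegularLocalRing {R : Type} [CommRing R] [IsLocalRing R]
    (h : IsRegularLocal R) : IsRegularLocalRing R := by
  obtain ⟨_, s, hs, hcard⟩ := h
  refine .of_spanFinrank_maximalIdeal_le R ?_
  rw [← hcard, ← hs]
  have := Submodule.spanFinrank_span_le_ncard_of_finite (R := R) s.finite_toSet
  rw [Set.ncard_coe_finset] at this
  exact_mod_cast this

lemma IsRegularLocal.isCohenMacaulayLocalRing {R : Type} [CommRing R] [IsLocalRing R]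
    (h : IsRegularLocal R) {n : ℕ} (hdim : ringKrullDim R = n) : IsCohenMacaulayLocalRing R :=
  have := h.isRegularLocalRing
  (isDomain_and_isCohenMacaulayLocalRing_of_isRegularLocalRing n R hdim).2

variable {R : Type u} [CommRing R] [IsLocalRing R] [IsNoetherianRing R]

theorem stmt5_general (h : IsCohenMacaulayLocalRing R) {n d : ℕ} (hdim : ringKrullDim R = n)
    {I : Ideal R} (hht : I.height = d) :
    Nontrivial ((localCohomology (maximalIdeal R) (n - d)).obj
      ((localCohomology I d).obj (ModuleCat.of R R))) := by
  have hI : I ≠ ⊤ := by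
    rintro rfl
    simp at hht
  obtain ⟨e, rfl⟩ : ∃ e, n = d + e := by
    refine Nat.exists_eq_add_of_le ?_
    have := Ideal.height_le_ringKrullDim_of_ne_top hI
    rw [hht, hdim] at this
    exact_mod_cast this
  obtain ⟨xs, ys, a, rfl, rfl, hxs, hys, hreg, haI, ha⟩ :=
    h.exists_isWeaklyRegular_append hdim hht
  have hmem : ∀ r ∈ xs ++ ys, r ∈ maximalIdeal R := fun r hr ↦
    (List.mem_append.1 hr).elim (fun h ↦ le_maximalIdeal hI (hxs r h)) (hys r)
  obtain ⟨k, hk⟩ := exists_maximalIdeal_pow_le_ofList hreg hmem (by simpa using hdim)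
  have haI' : ∀ r ∈ I, r • (toIteratedQuotient xs).app (ModuleCat.of R R) a = 0 := fun r hr ↦
    (map_smul _ r a).symm.trans <| (congrArg _ (mul_one (r * a)).symm).trans
      (toIteratedQuotient_smul_eq_zero (P := ModuleCat.of R R) (haI r hr) (1 : R))
  obtain ⟨φ, c, hφ, hc⟩ :=
    exists_smul_eq_zero_and_apply_eq ((isWeaklyRegular_append_iff R xs ys).1 hreg).1 hxs haI'
  rw [Nat.add_sub_cancel_left]
  exact nontrivial_localCohomology_of_hom_iteratedQuotient hreg hys hk φ
    (fun r hr ↦ hc r (Ideal.span_le.2 hxs hr)) hφ ha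

end MainTheorem

/-- Regular local ring `R` of dimension `n` containing a field, `I` a proper
ideal of height `d`.  Then `H_m^{n-d}(H_I^d(R)) ≠ 0`. -/
theorem stmt5 (R : Type) [CommRing R] [IsLocalRing R]
    (hreg : IsRegularLocal R) (hfield : ContainsField R)
    (n : ℕ) (hdim : ringKrullDim R = (n : WithBot ℕ∞))
    (I : Ideal R) (hI : I ≠ ⊤) (d : ℕ) (hht : idealHeight R I = (d : ℕ∞)) :
    Nontrivial
      ((localCohomology (IsLocalRing.maximalIdeal R) (n - d)).obj
        (ModuleCat.of R (LocalCohomologyMod R I d))) := by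
  have := hreg.1
  exact stmt5_general (hreg.isCohenMacaulayLocalRing hdim) hdim
    ((idealHeight_eq_height I).symm.trans hht)
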